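/- arXiv:1803.09306 — 2 statements merged into one kernel-verified Lean document; each statement's English description precedes it below -/
import Mathlib

section
/- Let d ≥ 1 be an integer and let ξ = (ξ₁,…,ξ_d) ∈ ℝ^d. Set Ξ = (ξ₁,…,ξ_d, ξ₁²+⋯+ξ_d²) ∈ ℝ^{d+1} and suppose Ξ is totally irrational. Then the uniform Diophantine exponent of Ξ satisfies ω̂(Ξ) ≤ H_d, where H_d is the unique positive root of the equation x^{d+1} + x^d + ⋯ + x = 1. -/
open Filter

/-- The "uniform approximation at exponent `γ`" property: for every sufficiently large
real `Q`, the system `max_j |q θ_j - a_j| < Q^(-γ)`, `1 ≤ q ≤ Q` has an integer solution.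
The uniform Diophantine exponent `ω̂(θ)` is the supremum of such `γ`. -/
def UnifApprox {m : ℕ} (θ : Fin m → ℝ) (γ : ℝ) : Prop :=
  ∀ᶠ Q : ℝ in atTop, ∃ (q : ℤ) (a : Fin m → ℤ),
    1 ≤ q ∧ (q : ℝ) ≤ Q ∧ ∀ j, |(q : ℝ) * θ j - (a j : ℝ)| < Q ^ (-γ)

/-- `1, θ₁, …, θ_m` are linearly independent over `ℚ`. -/
def TotallyIrrational {m : ℕ} (θ : Fin m → ℝ) : Prop :=
  LinearIndependent ℚ (Fin.cons (1 : ℝ) θ)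

/-!
Suppose that `ω̂(Ξ) > H_d`, and write `s_k(α) = 1 - α - ⋯ - α ^ k`, so that `H_d` is the root of
`s_{d+1}`. Choose `α < ω̂(Ξ)` slightly above `H_d`, so that `s_d(α) > 0 > s_{d+1}(α)`. The best
approximations `x_n = (q_n, a, b)` to `Ξ` then have error at most `q_{n+1} ^ (-α)`. As `α > 1/2`,
two consecutive ones would be proportional if the second were a zero of
`a₁² + ⋯ + a_d² - q b`; hence this form takes a nonzero integer value at `x_n`, and since that value
is `O(q_n q_{n+1} ^ (-α))`, we get `q_{n+1} ^ α = O(q_n)`.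

Now compare the heights (covolumes of the integer points) of the rational subspaces spanned by
consecutive `x_a, …, x_b`. Adjoining a vector multiplies the height by at most the distance from it
to the subspace, and Schmidt's inequality `h(U + W) h(U ∩ W) ≤ h(U) h(W)` transports such bounds
along the sequence. By induction on `k`, a span of dimension `k + 1` starting at `x_a` has height
`O(q_a ^ (s_k(α) / α ^ k))`. Take such a span of dimension `d + 1`, starting at some `x_{i+1}`, to
which adjoining `x_i` yields the whole space: the height of the latter is at least `1`, but it is
`O(q_{i+1} ^ (s_d(α) / α ^ d - α))`, where the exponent equals `s_{d+1}(α) / α ^ d < 0`.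
-/

/-- The defect `1 - α - α² - ⋯ - α^k`, whose first sign change in `k` decides whether heights of
spans of consecutive best approximations can stay bounded below. -/
noncomputable def geomDefect (α : ℝ) (k : ℕ) : ℝ := 1 - ∑ i ∈ Finset.range k, α ^ (i + 1)

namespace geomDefect

@[simp]
lemma zero_right (α : ℝ) : geomDefect α 0 = 1 := by simp [geomDefect]

lemma succ_right (α : ℝ) (k : ℕ) : geomDefect α (k + 1) = geomDefect α k - α ^ (k + 1) := by
  rw [geomDefect, geomDefect, Finset.sum_range_succ, sub_sub]

lemma one_right (α : ℝ) : geomDefect α 1 = 1 - α := by simp [succ_right]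

lemma antitone_right {α : ℝ} (hα : 0 ≤ α) : Antitone (geomDefect α) :=
  antitone_nat_of_succ_le fun k ↦ by
    rw [succ_right]
    exact sub_le_self _ (pow_nonneg hα _)

lemma strictAntiOn_left {k : ℕ} (hk : k ≠ 0) :
    StrictAntiOn (fun α ↦ geomDefect α k) (Set.Ici 0) := fun _ hα _ _ hαβ ↦
  sub_lt_sub_left (Finset.sum_lt_sum_of_nonempty (Finset.nonempty_range_iff.2 hk)
    fun _ _ ↦ pow_lt_pow_left₀ hαβ hα (Nat.succ_ne_zero _)) _

lemma continuous_left (k : ℕ) : Continuous fun α ↦ geomDefect α k := by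
  unfold geomDefect
  fun_prop

lemma one_half (k : ℕ) : geomDefect (1 / 2) k = (1 / 2) ^ k := by
  induction k with
  | zero => simp
  | succ k ih => rw [succ_right, ih]; ring

lemma succ_le_mul {α : ℝ} (hα : 1 / 2 ≤ α) (k : ℕ) :
    geomDefect α (k + 1) ≤ α * geomDefect α k := by
  induction k with
  | zero => rw [one_right, zero_right]; linarith
  | succ k ih => rw [succ_right _ (k + 1), succ_right _ k] at *; linear_combination ih

lemma exists_gt_root {d : ℕ} {H γ : ℝ} (hH : 0 < H) (hHγ : H < γ)
    (hroot : geomDefect H (d + 1) = 0) :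
    ∃ α, 1 / 2 < α ∧ α < γ ∧ 0 < geomDefect α d ∧ geomDefect α (d + 1) < 0 := by
  have one_half_lt : 1 / 2 < H := by
    rw [← (strictAntiOn_left d.succ_ne_zero).lt_iff_gt hH.le (by norm_num : (0 : ℝ) ≤ 1 / 2)]
    simp only [Nat.succ_eq_add_one, hroot, one_half]
    positivity
  have pos : 0 < geomDefect H d := by
    rw [succ_right, sub_eq_zero] at hroot
    exact hroot ▸ pow_pos hH _
  have near : ∀ᶠ α in nhds H, α < γ ∧ 0 < geomDefect α d :=
    (gt_mem_nhds hHγ).and ((continuous_left d).continuousAt.eventually (lt_mem_nhds pos))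
  obtain ⟨α, ⟨hαγ, hαd⟩, hHα⟩ :=
    ((near.filter_mono nhdsWithin_le_nhds).and (self_mem_nhdsWithin (s := Set.Ioi H))).exists
  refine ⟨α, one_half_lt.trans hHα, hαγ, hαd, ?_⟩
  rw [← hroot]
  exact strictAntiOn_left d.succ_ne_zero hH.le (hH.trans hHα).le hHα

end geomDefect

section GramVolume

variable {E κ κ' : Type*} [NormedAddCommGroup E] [InnerProductSpace ℝ E]

lemma gram_sum_smul [Fintype κ] (P : Matrix κ' κ ℝ) (v : κ → E) :
    Matrix.gram ℝ (fun i ↦ ∑ j, P i j • v j) = P * Matrix.gram ℝ v * P.transpose := by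
  ext i j
  simp only [Matrix.gram_apply, Matrix.mul_apply, Matrix.transpose_apply, sum_inner, inner_sum,
    real_inner_smul_left, real_inner_smul_right, Finset.sum_mul]
  exact Finset.sum_congr rfl fun _ _ ↦ Finset.sum_congr rfl fun _ _ ↦ by ring

variable [Fintype κ] [DecidableEq κ] [Fintype κ'] [DecidableEq κ']

/-- The volume of the parallelepiped spanned by the vectors `v i`, computed as the square root of
their Gram determinant; it vanishes when they are linearly dependent. -/
noncomputable def gramVolume (v : κ → E) : ℝ := √(Matrix.gram ℝ v).det

namespace gramVolume

lemma pos {v : κ → E} (hv : LinearIndependent ℝ v) : 0 < gramVolume v :=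
  Real.sqrt_pos.2 (Matrix.posDef_gram_of_linearIndependent hv).det_pos

lemma comp_equiv (v : κ → E) (e : κ' ≃ κ) : gramVolume (v ∘ e) = gramVolume v := by
  rw [gramVolume, gramVolume, ← Matrix.det_submatrix_equiv_self e]
  rfl

lemma of_isEmpty [IsEmpty κ] (v : κ → E) : gramVolume v = 1 := by
  simp [gramVolume]

lemma sum_smul (P : Matrix κ κ ℝ) (v : κ → E) :
    gramVolume (fun i ↦ ∑ j, P i j • v j) = |P.det| * gramVolume v := by
  rw [gramVolume, gram_sum_smul, Matrix.det_mul, Matrix.det_mul, Matrix.det_transpose,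
    mul_right_comm, ← sq, Real.sqrt_mul (sq_nonneg _), Real.sqrt_sq_eq_abs, gramVolume]

lemma sumElim_of_orthogonal {v : κ → E} {z : E} (hz : ∀ i, inner ℝ (v i) z = 0) :
    gramVolume (Sum.elim v fun _ : Unit ↦ z) = gramVolume v * ‖z‖ := by
  have gram_eq : Matrix.gram ℝ (Sum.elim v fun _ : Unit ↦ z) =
      Matrix.fromBlocks (Matrix.gram ℝ v) 0 0 (Matrix.of fun _ _ ↦ ‖z‖ ^ 2) := by
    ext (i | i) (j | j) <;> simp [hz, real_inner_comm (v _) z]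
  rw [gramVolume, gram_eq, Matrix.det_fromBlocks_zero₁₂, Matrix.det_unique (n := Unit),
    Matrix.of_apply, Real.sqrt_mul (Matrix.posSemidef_gram ℝ v).det_nonneg,
    Real.sqrt_sq (norm_nonneg z), gramVolume]

lemma sumElim_add_sum_smul (v : κ → E) (z : E) (c : κ → ℝ) :
    gramVolume (Sum.elim v fun _ : Unit ↦ ∑ i, c i • v i + z) =
      gramVolume (Sum.elim v fun _ : Unit ↦ z) := by
  let P : Matrix (κ ⊕ Unit) (κ ⊕ Unit) ℝ := Matrix.fromBlocks 1 0 (Matrix.of fun _ ↦ c) 1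
  have hP : P.det = 1 := by simp [P]
  have shear : (Sum.elim v fun _ : Unit ↦ ∑ i, c i • v i + z) =
      fun i ↦ ∑ j, P i j • (Sum.elim v fun _ : Unit ↦ z) j := by
    ext1 (i | i) <;> simp [P, Matrix.one_apply, ite_smul]
  rw [shear, sum_smul, hP, abs_one, one_mul]

lemma sumElim (v : κ → E) (u : E) :
    gramVolume (Sum.elim v fun _ : Unit ↦ u) =
      gramVolume v * Metric.infDist u (Submodule.span ℝ (Set.range v)) := by
  set S := Submodule.span ℝ (Set.range v)
  have : FiniteDimensional ℝ S := .span_of_finite ℝ (Set.finite_range v)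
  set z := u - S.starProjection u
  obtain ⟨c, hc⟩ := (Submodule.mem_span_range_iff_exists_fun ℝ).1
    (S.starProjection_apply_mem u)
  have hz : ∀ i, inner ℝ (v i) z = 0 := fun i ↦ by
    rw [real_inner_comm]
    exact S.starProjection_inner_eq_zero u _ (Submodule.subset_span ⟨i, rfl⟩)
  have infDist_eq : Metric.infDist u S = ‖z‖ := by
    rw [S.starProjection_minimal, Metric.infDist_eq_iInf]
    simp only [dist_eq_norm]
    rfl
  rw [infDist_eq, ← sumElim_of_orthogonal hz, ← sumElim_add_sum_smul v z c, hc,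
    add_sub_cancel]

end gramVolume

end GramVolume

section IntPoints

variable {ι κ : Type*}

/-- The inclusion `ℤ^ι → ℚ^ι`. -/
abbrev intToRat : (ι → ℤ) →ₗ[ℤ] (ι → ℚ) := Pi.algebraMap ι ℤ ℚ

/-- The inclusion `ℤ^ι → ℝ^ι`, where `ℝ^ι` carries its Euclidean norm. -/
def intToEuclidean : (ι → ℤ) →ₗ[ℤ] EuclideanSpace ℝ ι :=
  (WithLp.linearEquiv 2 ℤ (ι → ℝ)).symm.toLinearMap ∘ₗ Pi.algebraMap ι ℤ ℝ

/-- The lattice of integer points of the rational subspace `W`. -/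
def intPoints (W : Submodule ℚ (ι → ℚ)) : Submodule ℤ (ι → ℤ) :=
  (W.restrictScalars ℤ).comap intToRat

/-- The real subspace spanned by the rational subspace `W`. -/
def realSpan (W : Submodule ℚ (ι → ℚ)) : Submodule ℝ (EuclideanSpace ℝ ι) :=
  Submodule.span ℝ (intToEuclidean '' intPoints W)

@[simp] lemma intToEuclidean_apply (z : ι → ℤ) (i : ι) : intToEuclidean z i = z i := rfl

lemma intToRat_injective : Function.Injective (intToRat (ι := ι)) :=
  Int.cast_injective.comp_left

lemma mem_intPoints {W : Submodule ℚ (ι → ℚ)} {z : ι → ℤ} :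
    z ∈ intPoints W ↔ intToRat z ∈ W := Iff.rfl

lemma intPoints_mono : Monotone (intPoints (ι := ι)) := fun _ _ h _ hz ↦ h hz

lemma realSpan_mono : Monotone (realSpan (ι := ι)) := fun _ _ h ↦
  Submodule.span_mono (Set.image_mono (intPoints_mono h))

lemma intToEuclidean_mem_realSpan {W : Submodule ℚ (ι → ℚ)} {z : ι → ℤ} (hz : intToRat z ∈ W) :
    intToEuclidean z ∈ realSpan W :=
  Submodule.subset_span ⟨z, hz, rfl⟩

lemma zsmul_mem_iff (W : Submodule ℚ (ι → ℚ)) {n : ℤ} (hn : n ≠ 0) {w : ι → ℚ} :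
    n • w ∈ W ↔ w ∈ W := by
  rw [← Int.cast_smul_eq_zsmul ℚ]
  exact W.smul_mem_iff (Int.cast_ne_zero.2 hn)

@[simp]
lemma intToRat_eq_zero {z : ι → ℤ} : intToRat z = 0 ↔ z = 0 :=
  map_eq_zero_iff _ intToRat_injective

@[simp]
lemma realSpan_bot : realSpan (⊥ : Submodule ℚ (ι → ℚ)) = ⊥ := by
  rw [realSpan, Submodule.span_eq_bot]
  rintro _ ⟨z, hz, rfl⟩
  rw [intToRat_eq_zero.1 ((Submodule.mem_bot ℚ).1 hz), map_zero]

lemma isTorsionFree_quotient_intPoints (V U : Submodule ℚ (ι → ℚ)) :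
    Module.IsTorsionFree ℤ (intPoints U ⧸ (intPoints V).submoduleOf (intPoints U)) := by
  refine Module.isTorsionFree_iff_smul_eq_zero.2 fun n z h ↦ ?_
  obtain ⟨z, rfl⟩ := Submodule.Quotient.mk_surjective _ z
  rw [← Submodule.Quotient.mk_smul, Submodule.Quotient.mk_eq_zero] at h
  rw [or_iff_not_imp_left, Submodule.Quotient.mk_eq_zero]
  exact fun hn ↦ (zsmul_mem_iff V hn).1 (map_zsmul intToRat n (z : ι → ℤ) ▸ h)

lemma linearIndependent_coe_basis {L : Submodule ℤ (ι → ℤ)} (b : Module.Basis κ ℤ L) :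
    LinearIndependent ℤ fun i ↦ (b i : ι → ℤ) :=
  b.linearIndependent.map' L.subtype L.ker_subtype

lemma span_range_intToEuclidean_basis {W : Submodule ℚ (ι → ℚ)}
    (b : Module.Basis κ ℤ (intPoints W)) :
    Submodule.span ℝ (Set.range fun i ↦ intToEuclidean (b i : ι → ℤ)) = realSpan W := by
  have span_int : Submodule.span ℤ (Set.range fun i ↦ intToEuclidean (b i : ι → ℤ)) =
      (intPoints W).map intToEuclidean := by
    have := Submodule.map_span (intToEuclidean ∘ₗ (intPoints W).subtype) (Set.range b)
    rwa [b.span_eq, Submodule.map_comp, Submodule.map_subtype_top, ← Set.range_comp, eq_comm]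
      at this
  rw [← Submodule.span_span_of_tower ℤ ℝ, span_int, Submodule.map_coe, realSpan]

variable [Finite ι]

lemma linearIndependent_intToEuclidean {v : κ → ι → ℤ} (hv : LinearIndependent ℤ v) :
    LinearIndependent ℝ fun i ↦ intToEuclidean (v i) :=
  (linearIndependent_algebraMap_comp_iff (S := ℝ).2 hv).map'
    (WithLp.linearEquiv 2 ℝ (ι → ℝ)).symm.toLinearMap (LinearEquiv.ker _)

lemma linearIndependent_sumElim_of_notMem {W : Submodule ℚ (ι → ℚ)} {v : κ → ι → ℤ} {y : ι → ℤ}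
    (hv : LinearIndependent ℤ v) (hvW : ∀ i, intToRat (v i) ∈ W) (hy : intToRat y ∉ W) :
    LinearIndependent ℤ (Sum.elim v fun _ : Unit ↦ y) := by
  rw [← linearIndependent_algebraMap_comp_iff (S := ℚ)] at hv ⊢
  have y_ne : intToRat y ≠ 0 := fun h ↦ hy (h ▸ W.zero_mem)
  have disjoint : Disjoint (Submodule.span ℚ (Set.range fun i ↦ intToRat (v i)))
      (Submodule.span ℚ (Set.range fun _ : Unit ↦ intToRat y)) := by
    rw [Set.range_const, Submodule.disjoint_span_singleton' y_ne]
    exact fun h ↦ hy (Submodule.span_le.2 (Set.range_subset_iff.2 hvW) h)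
  have indep : LinearIndependent ℚ (Sum.elim (intToRat ∘ v) (intToRat ∘ fun _ : Unit ↦ y)) :=
    hv.sum_type (linearIndependent_unique_iff.2 y_ne) disjoint
  rwa [← Sum.comp_elim] at indep

lemma exists_intToRat_eq_zsmul (w : ι → ℚ) :
    ∃ (n : ℤ) (z : ι → ℤ), n ≠ 0 ∧ intToRat z = n • w := by
  have := Fintype.ofFinite ι
  obtain ⟨n, hn⟩ := IsLocalization.exist_integer_multiples (nonZeroDivisors ℤ) Finset.univ w
  choose z hz using fun i ↦ hn i (Finset.mem_univ i)
  exact ⟨n, z, nonZeroDivisors.coe_ne_zero n, funext hz⟩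

lemma span_intToRat_intPoints (W : Submodule ℚ (ι → ℚ)) :
    Submodule.span ℚ (intToRat '' intPoints W) = W := by
  refine le_antisymm (Submodule.span_le.2 (Set.image_subset_iff.2 fun z hz ↦ hz)) fun w hw ↦ ?_
  obtain ⟨n, z, hn, hz⟩ := exists_intToRat_eq_zsmul w
  have z_mem : z ∈ intPoints W := by rwa [mem_intPoints, hz, zsmul_mem_iff _ hn]
  rw [← zsmul_mem_iff _ hn, ← hz]
  exact Submodule.subset_span ⟨z, z_mem, rfl⟩

lemma finrank_intPoints (W : Submodule ℚ (ι → ℚ)) :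
    Module.finrank ℤ (intPoints W) = Module.finrank ℚ W := by
  have := Fintype.ofFinite ι
  let e := (intPoints W).equivMapOfInjective intToRat intToRat_injective
  have := Module.Free.of_equiv e
  have := Module.Finite.equiv e
  rw [e.finrank_eq, ← Submodule.finrank_span_eq_finrank (A := ℚ), Submodule.map_coe,
    span_intToRat_intPoints]

end IntPoints

section Height

variable {ι κ : Type*} [Fintype ι] [Fintype κ] [DecidableEq κ]

lemma gramVolume_intToEuclidean_pos {v : κ → ι → ℤ} (hv : LinearIndependent ℤ v) :
    0 < gramVolume fun i ↦ intToEuclidean (v i) :=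
  gramVolume.pos (linearIndependent_intToEuclidean hv)

lemma one_le_gramVolume_intToEuclidean {v : κ → ι → ℤ} (hv : LinearIndependent ℤ v) :
    1 ≤ gramVolume fun i ↦ intToEuclidean (v i) := by
  let G : Matrix κ κ ℤ := Matrix.of fun i j ↦ ∑ k, v j k * v i k
  have gram_eq : Matrix.gram ℝ (fun i ↦ intToEuclidean (v i)) = G.map (Int.castRingHom ℝ) := by
    ext i j
    simp [G, PiLp.inner_apply]
  have det_pos := Real.sqrt_pos.1 (gramVolume_intToEuclidean_pos hv)
  rw [gramVolume, Real.one_le_sqrt]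
  rw [gram_eq, ← RingHom.mapMatrix_apply, ← RingHom.map_det, eq_intCast] at det_pos ⊢
  exact_mod_cast det_pos

lemma gramVolume_basis_le_of_mem {L : Submodule ℤ (ι → ℤ)} (b : Module.Basis κ ℤ L)
    {v : κ → ι → ℤ} (hv : LinearIndependent ℤ v) (hvL : ∀ i, v i ∈ L) :
    gramVolume (fun i ↦ intToEuclidean (b i : ι → ℤ)) ≤
      gramVolume fun i ↦ intToEuclidean (v i) := by
  let P : Matrix κ κ ℤ := Matrix.of fun i ↦ b.repr ⟨v i, hvL i⟩
  have v_eq : (fun i ↦ intToEuclidean (v i)) =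
      fun i ↦ ∑ j, P.map (Int.castRingHom ℝ) i j • intToEuclidean (b j : ι → ℤ) := by
    ext1 i
    have := congrArg (intToEuclidean ∘ₗ L.subtype) (b.sum_repr ⟨v i, hvL i⟩)
    simp only [map_sum, map_zsmul, ← Int.cast_smul_eq_zsmul ℝ] at this
    exact this.symm
  have volume_eq : gramVolume (fun i ↦ intToEuclidean (v i)) =
      |(P.det : ℝ)| * gramVolume fun i ↦ intToEuclidean (b i : ι → ℤ) := by
    rw [v_eq, gramVolume.sum_smul, ← RingHom.mapMatrix_apply, ← RingHom.map_det, eq_intCast]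
  have det_ne : P.det ≠ 0 := fun h ↦ by
    have := gramVolume_intToEuclidean_pos hv
    rw [volume_eq, h, Int.cast_zero, abs_zero, zero_mul] at this
    exact this.false
  rw [volume_eq]
  exact le_mul_of_one_le_left (Real.sqrt_nonneg _) (mod_cast Int.one_le_abs det_ne)

/-- The height of a rational subspace: the covolume of its lattice of integer points. -/
noncomputable def height (W : Submodule ℚ (ι → ℚ)) : ℝ :=
  gramVolume fun i ↦ intToEuclidean (Module.finBasis ℤ (intPoints W) i : ι → ℤ)

lemma one_le_height (W : Submodule ℚ (ι → ℚ)) : 1 ≤ height W :=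
  one_le_gramVolume_intToEuclidean (linearIndependent_coe_basis _)

lemma height_pos (W : Submodule ℚ (ι → ℚ)) : 0 < height W :=
  zero_lt_one.trans_le (one_le_height W)

lemma height_le_gramVolume {W : Submodule ℚ (ι → ℚ)} {v : κ → ι → ℤ}
    (hv : LinearIndependent ℤ v) (hvW : ∀ i, intToRat (v i) ∈ W)
    (hcard : Fintype.card κ = Module.finrank ℚ W) :
    height W ≤ gramVolume fun i ↦ intToEuclidean (v i) := by
  let e : Fin (Module.finrank ℤ (intPoints W)) ≃ κ :=
    (finCongr (by rw [finrank_intPoints, hcard])).trans (Fintype.equivFin κ).symm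
  rw [← gramVolume.comp_equiv _ e]
  exact gramVolume_basis_le_of_mem _ (hv.comp e e.injective) fun i ↦ hvW (e i)

lemma height_eq_gramVolume {W : Submodule ℚ (ι → ℚ)} (b : Module.Basis κ ℤ (intPoints W)) :
    height W = gramVolume fun i ↦ intToEuclidean (b i : ι → ℤ) := by
  refine le_antisymm (height_le_gramVolume (linearIndependent_coe_basis b) (fun i ↦ (b i).2)
    (by rw [← Module.finrank_eq_card_basis b, finrank_intPoints])) ?_
  let e := (Module.finBasis ℤ (intPoints W)).indexEquiv b
  rw [height, ← gramVolume.comp_equiv _ e.symm]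
  exact gramVolume_basis_le_of_mem b
    ((linearIndependent_coe_basis _).comp e.symm e.symm.injective) fun i ↦ Subtype.prop _

@[simp]
lemma height_bot : height (⊥ : Submodule ℚ (ι → ℚ)) = 1 := by
  have : IsEmpty (Fin (Module.finrank ℤ (intPoints (⊥ : Submodule ℚ (ι → ℚ))))) := by
    rw [finrank_intPoints, finrank_bot]
    infer_instance
  exact gramVolume.of_isEmpty _

lemma height_sup_span_singleton_le {W : Submodule ℚ (ι → ℚ)} {y : ι → ℤ}
    (hy : intToRat y ∉ W) :
    height (W ⊔ Submodule.span ℚ {intToRat y}) ≤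
      height W * Metric.infDist (intToEuclidean y) (realSpan W) := by
  let b := Module.finBasis ℤ (intPoints W)
  have indep := linearIndependent_sumElim_of_notMem (linearIndependent_coe_basis b)
    (fun i ↦ (b i).2) hy
  refine (height_le_gramVolume indep ?_ ?_).trans_eq ?_
  · rintro (i | _)
    · exact Submodule.mem_sup_left (b i).2
    · exact Submodule.mem_sup_right (Submodule.mem_span_singleton_self _)
  · rw [Submodule.finrank_sup_span_singleton hy, Fintype.card_sum, Fintype.card_fin,
      finrank_intPoints, Fintype.card_unit]
  · rw [height, ← span_range_intToEuclidean_basis b, ← gramVolume.sumElim]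
    congr 1
    exact Sum.comp_elim intToEuclidean _ _

lemma exists_height_eq_mul_infDist {V U : Submodule ℚ (ι → ℚ)} (hVU : V ≤ U)
    (hrank : Module.finrank ℚ U = Module.finrank ℚ V + 1) :
    ∃ u : ι → ℤ, intToRat u ∈ U ∧ intToRat u ∉ V ∧
      height U = height V * Metric.infDist (intToEuclidean u) (realSpan V) := by
  let b := Module.finBasis ℤ (intPoints V)
  let Γ := (intPoints V).submoduleOf (intPoints U)
  let e : Γ ≃ₗ[ℤ] intPoints V := Submodule.submoduleOfEquivOfLe (intPoints_mono hVU)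
  have := isTorsionFree_quotient_intPoints V U
  let c := Module.finBasis ℤ (intPoints U ⧸ Γ)
  have finrank_quotient : Module.finrank ℤ (intPoints U ⧸ Γ) = 1 := by
    have := Submodule.finrank_quotient_add_finrank Γ
    rw [e.finrank_eq, finrank_intPoints, finrank_intPoints, hrank] at this
    lia
  let B : Module.Basis (_ ⊕ Unit) ℤ (intPoints U) :=
    (b.map e.symm).sumQuot (c.reindex ((finCongr finrank_quotient).trans finOneEquiv))
  refine ⟨B (.inr ()), (B (.inr ())).2, fun mem ↦ ?_, ?_⟩
  · have : B (.inr ()) ∈ Γ := mem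
    rw [← Submodule.Quotient.mk_eq_zero, Module.Basis.sumQuot_inr] at this
    exact Module.Basis.ne_zero _ _ this
  · have B_eq : (fun i ↦ intToEuclidean (B i : ι → ℤ)) =
        Sum.elim (fun i ↦ intToEuclidean (b i : ι → ℤ))
          fun _ : Unit ↦ intToEuclidean (B (.inr ()) : ι → ℤ) := by
      ext1 (i | _)
      · simp only [B, Module.Basis.sumQuot_inl]
        rfl
      · rfl
    rw [height_eq_gramVolume B, B_eq, gramVolume.sumElim, span_range_intToEuclidean_basis, height]

lemma height_sup_mul_height_inf_le {U W : Submodule ℚ (ι → ℚ)}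
    (hrank : Module.finrank ℚ W = Module.finrank ℚ ↥(U ⊓ W) + 1) :
    height (U ⊔ W) * height (U ⊓ W) ≤ height U * height W := by
  obtain ⟨w, hwW, hwU, height_W⟩ := exists_height_eq_mul_infDist inf_le_right hrank
  replace hwU : intToRat w ∉ U := fun h ↦ hwU ⟨h, hwW⟩
  have W_eq : U ⊓ W ⊔ Submodule.span ℚ {intToRat w} = W := by
    refine Submodule.eq_of_le_of_finrank_eq ?_ ?_
    · exact sup_le inf_le_right ((Submodule.span_singleton_le_iff_mem _ _).2 hwW)
    · rw [Submodule.finrank_sup_span_singleton fun h : _ ∈ U ⊓ W ↦ hwU h.1, hrank]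
  have sup_eq : U ⊔ W = U ⊔ Submodule.span ℚ {intToRat w} := by
    rw [← W_eq, ← sup_assoc, sup_inf_self]
  have infDist_le : Metric.infDist (intToEuclidean w) (realSpan U) ≤
      Metric.infDist (intToEuclidean w) (realSpan (U ⊓ W)) :=
    Metric.infDist_le_infDist_of_subset (realSpan_mono inf_le_left) ⟨0, zero_mem _⟩
  calc height (U ⊔ W) * height (U ⊓ W)
      ≤ height U * Metric.infDist (intToEuclidean w) (realSpan U) * height (U ⊓ W) := by
        rw [sup_eq]
        exact mul_le_mul_of_nonneg_right (height_sup_span_singleton_le hwU) (height_pos _).le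
    _ ≤ height U * Metric.infDist (intToEuclidean w) (realSpan (U ⊓ W)) * height (U ⊓ W) := by
        have := height_pos U
        have := height_pos (U ⊓ W)
        gcongr
    _ = height U * height W := by rw [height_W]; ring

lemma height_span_singleton_le {z : ι → ℤ} (hz : z ≠ 0) :
    height (Submodule.span ℚ {intToRat z}) ≤ ‖intToEuclidean z‖ := by
  have := height_sup_span_singleton_le (W := ⊥) (y := z) (by simpa using hz)
  simpa using this

lemma exists_height_eq_norm {W : Submodule ℚ (ι → ℚ)} (hW : Module.finrank ℚ W = 1) :
    ∃ z : ι → ℤ, z ≠ 0 ∧ intToRat z ∈ W ∧ height W = ‖intToEuclidean z‖ := by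
  obtain ⟨u, huW, hu, height_eq⟩ := exists_height_eq_mul_infDist (bot_le : ⊥ ≤ W) (by simp [hW])
  refine ⟨u, fun h ↦ hu (by simp [h]), huW, ?_⟩
  simpa using height_eq

end Height

/-- The span of the consecutive terms `x a, …, x b` of a sequence. -/
def spanIcc (K : Type*) {V : Type*} [Field K] [AddCommGroup V] [Module K V] (x : ℕ → V)
    (a b : ℕ) : Submodule K V :=
  Submodule.span K (x '' Set.Icc a b)

namespace spanIcc

variable {K V : Type*} [Field K] [AddCommGroup V] [Module K V] {x : ℕ → V} {a b j p n : ℕ}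

lemma mem (ha : a ≤ n) (hb : n ≤ b) : x n ∈ spanIcc K x a b :=
  Submodule.subset_span ⟨n, ⟨ha, hb⟩, rfl⟩

lemma mono {a' b' : ℕ} (ha : a' ≤ a) (hb : b ≤ b') : spanIcc K x a b ≤ spanIcc K x a' b' :=
  Submodule.span_mono (Set.image_mono (Set.Icc_subset_Icc ha hb))

lemma self (x : ℕ → V) (a : ℕ) : spanIcc K x a a = Submodule.span K {x a} := by
  rw [spanIcc, Set.Icc_self, Set.image_singleton]

lemma succ_right (h : a ≤ b + 1) :
    spanIcc K x a (b + 1) = spanIcc K x a b ⊔ Submodule.span K {x (b + 1)} := by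
  rw [spanIcc, ← Set.insert_Icc_right_eq_Icc_add_one h, Set.image_insert_eq, Submodule.span_insert,
    sup_comm, spanIcc]

lemma eq_sup_left (h : a ≤ b) :
    spanIcc K x a b = spanIcc K x (a + 1) b ⊔ Submodule.span K {x a} := by
  rw [spanIcc, ← Set.insert_Icc_add_one_left_eq_Icc h, Set.image_insert_eq, Submodule.span_insert,
    sup_comm, spanIcc]

lemma succ_right_of_mem (h : a ≤ b + 1) (hx : x (b + 1) ∈ spanIcc K x a b) :
    spanIcc K x a (b + 1) = spanIcc K x a b := by
  rw [succ_right h, sup_eq_left, Submodule.span_singleton_le_iff_mem]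
  exact hx

lemma eq_succ_left_of_mem (h : a ≤ b) (hx : x a ∈ spanIcc K x (a + 1) b) :
    spanIcc K x a b = spanIcc K x (a + 1) b := by
  rw [eq_sup_left h, sup_eq_left, Submodule.span_singleton_le_iff_mem]
  exact hx

lemma finrank_le (x : ℕ → V) (a b : ℕ) : Module.finrank K (spanIcc K x a b) ≤ b + 1 - a := by
  classical
  rw [spanIcc, ← Finset.coe_Icc, ← Finset.coe_image]
  exact (finrank_span_finset_le_card _).trans (Finset.card_image_le.trans_eq (Nat.card_Icc a b))

lemma sup_succ_right (haj : a ≤ j) (hjp : j ≤ p + 1) :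
    spanIcc K x a p ⊔ spanIcc K x j (p + 1) = spanIcc K x a (p + 1) := by
  have le : spanIcc K x j p ≤ spanIcc K x a p := mono haj le_rfl
  rw [succ_right hjp, succ_right (haj.trans hjp), ← sup_assoc, sup_eq_left.2 le]

lemma exists_eq_notMem_succ_left (hx : x b ≠ 0) (hab : a ≤ b) :
    ∃ i, a ≤ i ∧ i ≤ b ∧ spanIcc K x i b = spanIcc K x a b ∧ x i ∉ spanIcc K x (i + 1) b := by
  induction hab using Nat.decreasingInduction with
  | self => exact ⟨b, le_rfl, le_rfl, rfl, by simpa [spanIcc] using hx⟩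
  | of_succ c hc ih =>
    by_cases mem : x c ∈ spanIcc K x (c + 1) b
    · obtain ⟨i, hci, hib, span_eq, notMem⟩ := ih
      exact ⟨i, by lia, hib, span_eq.trans (eq_succ_left_of_mem hc.le mem).symm, notMem⟩
    · exact ⟨c, le_rfl, hc.le, rfl, mem⟩

lemma exists_succ_eq_notMem (hab : a ≤ b) (hne : spanIcc K x a a ≠ spanIcc K x a b) :
    ∃ p, a ≤ p ∧ spanIcc K x a (p + 1) = spanIcc K x a b ∧ x (p + 1) ∉ spanIcc K x a p := by
  induction b, hab using Nat.le_induction with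
  | base => exact absurd rfl hne
  | succ b hab ih =>
    by_cases mem : x (b + 1) ∈ spanIcc K x a b
    · rw [succ_right_of_mem (by lia) mem] at hne ⊢
      exact ih hne
    · exact ⟨b, hab, rfl, mem⟩

variable [FiniteDimensional K V]

lemma finrank_succ_right (h : a ≤ p + 1) (hx : x (p + 1) ∉ spanIcc K x a p) :
    Module.finrank K (spanIcc K x a (p + 1)) = Module.finrank K (spanIcc K x a p) + 1 := by
  rw [succ_right h, Submodule.finrank_sup_span_singleton hx]

lemma finrank_eq_succ_left (h : a ≤ b) (hx : x a ∉ spanIcc K x (a + 1) b) :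
    Module.finrank K (spanIcc K x a b) = Module.finrank K (spanIcc K x (a + 1) b) + 1 := by
  rw [eq_sup_left h, Submodule.finrank_sup_span_singleton hx]

lemma inf_succ_right (haj : a ≤ j) (hjp : j ≤ p + 1) (hx : x (p + 1) ∉ spanIcc K x a p) :
    spanIcc K x a p ⊓ spanIcc K x j (p + 1) = spanIcc K x j p := by
  refine (Submodule.eq_of_le_of_finrank_eq (le_inf (mono haj le_rfl) (mono le_rfl p.le_succ))
    ?_).symm
  have finrank_eq := Submodule.finrank_sup_add_finrank_inf_eq (spanIcc K x a p)
    (spanIcc K x j (p + 1))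
  rw [sup_succ_right haj hjp, finrank_succ_right (haj.trans hjp) hx,
    finrank_succ_right hjp fun h ↦ hx (mono haj le_rfl h)] at finrank_eq
  lia

end spanIcc

section LogHeight

variable {ι : Type*} {x : ℕ → ι → ℤ} {t : ℕ → ℝ} {α C : ℝ} {a b j p k : ℕ}

/-- The rational subspace spanned by the consecutive integer points `x a, …, x b`. -/
abbrev ratSpan (x : ℕ → ι → ℤ) (a b : ℕ) : Submodule ℚ (ι → ℚ) :=
  spanIcc ℚ (fun n ↦ intToRat (x n)) a b

lemma finrank_ratSpan_le (x : ℕ → ι → ℤ) (a b : ℕ) :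
    Module.finrank ℚ (ratSpan x a b) ≤ b + 1 - a :=
  spanIcc.finrank_le _ a b

lemma ratSpan_self (x : ℕ → ι → ℤ) (a : ℕ) : ratSpan x a a = Submodule.span ℚ {intToRat (x a)} :=
  spanIcc.self _ a

variable [Fintype ι]

/-- The logarithmic height of the span of the consecutive integer points `x a, …, x b`. -/
noncomputable def logHeight (x : ℕ → ι → ℤ) (a b : ℕ) : ℝ :=
  Real.log (height (ratSpan x a b))

lemma logHeight_nonneg (x : ℕ → ι → ℤ) (a b : ℕ) : 0 ≤ logHeight x a b :=
  Real.log_nonneg (one_le_height _)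

lemma logHeight_congr {a' b' : ℕ} (h : ratSpan x a b = ratSpan x a' b') :
    logHeight x a b = logHeight x a' b' := by
  rw [logHeight, h, logHeight]

lemma logHeight_succ_right_add_le (haj : a ≤ j) (hjp : j ≤ p + 1)
    (hx : intToRat (x (p + 1)) ∉ ratSpan x a p) :
    logHeight x a (p + 1) + logHeight x j p ≤ logHeight x a p + logHeight x j (p + 1) := by
  have inf_eq := spanIcc.inf_succ_right haj hjp hx
  have height_le := height_sup_mul_height_inf_le (U := ratSpan x a p)
    (W := ratSpan x j (p + 1)) <| by
      rw [inf_eq]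
      exact spanIcc.finrank_succ_right hjp fun h ↦ hx (spanIcc.mono haj le_rfl h)
  rw [inf_eq, spanIcc.sup_succ_right haj hjp] at height_le
  simp only [logHeight]
  rw [← Real.log_mul (height_pos _).ne' (height_pos _).ne',
    ← Real.log_mul (height_pos _).ne' (height_pos _).ne']
  exact Real.log_le_log (mul_pos (height_pos _) (height_pos _)) height_le

/-- A sequence of integer points of logarithmic sizes `t n` such that adjoining `x j` to a span
containing `x (j + 1)` multiplies the height by `O(exp (-α t (j + 1)))`. -/
structure IsContractingSeq (x : ℕ → ι → ℤ) (t : ℕ → ℝ) (α C : ℝ) : Prop where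
  notMem_span_succ n : intToRat (x n) ∉ Submodule.span ℚ {intToRat (x (n + 1))}
  le_logHeight_self n : t n ≤ logHeight x n n
  logHeight_self_le n : logHeight x n n ≤ t n + C
  size_succ_le n : t (n + 1) ≤ t n / α + C
  logHeight_le {j b : ℕ} (hjb : j < b) (hx : intToRat (x j) ∉ ratSpan x (j + 1) b) :
    logHeight x j b ≤ logHeight x (j + 1) b - α * t (j + 1) + C

/-- Spans of dimension `k + 1` grow in height at most by the power `s_{k+1} / (α s_k)`, where
`s = geomDefect α`, when the next point of the sequence is adjoined to them. -/
def RightStepBound (x : ℕ → ι → ℤ) (α : ℝ) (k : ℕ) : Prop :=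
  ∃ K, ∀ ⦃a p⦄, Module.finrank ℚ (ratSpan x a p) = k + 1 → intToRat (x (p + 1)) ∉ ratSpan x a p →
    logHeight x a (p + 1) ≤ geomDefect α (k + 1) / (α * geomDefect α k) * logHeight x a p + K

/-- Spans of dimension `k + 1` have logarithmic height at most `s_k / α ^ k` times the logarithmic
size of their first point, where `s = geomDefect α`. -/
def LeftEndBound (x : ℕ → ι → ℤ) (t : ℕ → ℝ) (α : ℝ) (k : ℕ) : Prop :=
  ∃ K, ∀ ⦃a b⦄, Module.finrank ℚ (ratSpan x a b) = k + 1 →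
    logHeight x a b ≤ geomDefect α k / α ^ k * t a + K

/-- The convex combination of the submodularity and contraction bounds with weights proportional
to `s_{k+2}` and `α s_k - s_{k+1}` eliminates `T`. -/
lemma exists_le_of_submodular_of_contracting (hα : 1 / 2 ≤ α) (hs : 0 < geomDefect α (k + 2))
    (C K₁ K₂ : ℝ) :
    ∃ K, ∀ {u R T Y Z : ℝ}, Y + R ≤ Z + T → Y ≤ T - α * u + C →
      T ≤ geomDefect α (k + 1) / (α * geomDefect α k) * R + K₁ →
      T ≤ geomDefect α (k + 1) / α ^ (k + 1) * u + K₂ →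
      Y ≤ geomDefect α (k + 2) / (α * geomDefect α (k + 1)) * Z + K := by
  have α_pos : 0 < α := by linarith
  have pow_pos : 0 < α ^ (k + 1) := by positivity
  have s_pos {j : ℕ} (hj : j ≤ k + 2) : 0 < geomDefect α j :=
    hs.trans_le (geomDefect.antitone_right α_pos.le hj)
  have s₁_pos := s_pos (k + 1).le_succ
  have s₀_pos := s_pos (k.le_add_right 2)
  have weight_nonneg := sub_nonneg.2 (geomDefect.succ_le_mul hα k)
  have s₁_eq := geomDefect.succ_right α k
  have s₂_eq : geomDefect α (k + 2) = geomDefect α (k + 1) - α * α ^ (k + 1) := by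
    rw [geomDefect.succ_right, pow_succ' α]
  set s₀ := geomDefect α k
  set s₁ := geomDefect α (k + 1)
  set s₂ := geomDefect α (k + 2)
  set r := α ^ (k + 1)
  refine ⟨((α * s₀ - s₁) * (α * r * K₂ + s₁ * C) + s₂ * (α * s₀ * K₁)) / (α * s₁ ^ 2),
    fun {u R T Y Z} submodular contracting hR hu ↦ ?_⟩
  have hR' : α * s₀ * T ≤ s₁ * R + α * s₀ * K₁ := by
    calc _ ≤ α * s₀ * (s₁ / (α * s₀) * R + K₁) := by gcongr
      _ = _ := by field_simp
  have hu' : r * T ≤ s₁ * u + r * K₂ := by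
    calc _ ≤ r * (s₁ / r * u + K₂) := by gcongr
      _ = _ := by field_simp
  have contracted : s₁ * Y ≤ s₂ * T + (α * r * K₂ + s₁ * C) := by
    linear_combination s₁ * contracting + α * hu' - T * s₂_eq
  have submodular' : s₁ * Y ≤ s₁ * Z - (α * s₀ - s₁) * T + α * s₀ * K₁ := by
    linear_combination s₁ * submodular + hR'
  rw [← sub_nonneg]
  have : 0 ≤ α * s₁ ^ 2 * (s₂ / (α * s₁) * Z +
      ((α * s₀ - s₁) * (α * r * K₂ + s₁ * C) + s₂ * (α * s₀ * K₁)) / (α * s₁ ^ 2) - Y) := by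
    field_simp
    linear_combination (α * s₀ - s₁) * contracted + s₂ * submodular' + s₁ * Y * (α * s₁_eq - s₂_eq)
  exact nonneg_of_mul_nonneg_right this (by positivity)

namespace IsContractingSeq

lemma intToRat_ne_zero (S : IsContractingSeq x t α C) (n : ℕ) : intToRat (x n) ≠ 0 := fun h ↦
  S.notMem_span_succ n (h ▸ zero_mem _)

lemma finrank_ratSpan_self (S : IsContractingSeq x t α C) (n : ℕ) :
    Module.finrank ℚ (ratSpan x n n) = 1 := by
  rw [ratSpan_self, finrank_span_singleton (S.intToRat_ne_zero n)]

lemma exists_logHeight_le (S : IsContractingSeq x t α C)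
    (hrank : Module.finrank ℚ (ratSpan x a b) = k + 2) :
    ∃ i, a ≤ i ∧ i < b ∧ Module.finrank ℚ (ratSpan x (i + 1) b) = k + 1 ∧
      logHeight x a b ≤ logHeight x (i + 1) b - α * t (i + 1) + C := by
  have hab := finrank_ratSpan_le x a b
  obtain ⟨i, hai, hib, span_eq, notMem⟩ := spanIcc.exists_eq_notMem_succ_left (K := ℚ)
    (x := fun n ↦ intToRat (x n)) (S.intToRat_ne_zero b) (by lia : a ≤ b)
  have finrank_i := spanIcc.finrank_eq_succ_left hib notMem
  rw [span_eq, hrank] at finrank_i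
  have hib' := finrank_ratSpan_le x (i + 1) b
  have hib : i < b := by lia
  exact ⟨i, hai, hib, by lia, logHeight_congr span_eq ▸ S.logHeight_le hib notMem⟩

lemma leftEndBound_zero (S : IsContractingSeq x t α C) : LeftEndBound x t α 0 := by
  refine ⟨C, fun a b hrank ↦ ?_⟩
  have hab := finrank_ratSpan_le x a b
  have span_eq : ratSpan x a a = ratSpan x a b :=
    Submodule.eq_of_le_of_finrank_eq (spanIcc.mono le_rfl (by lia))
      (by rw [hrank, S.finrank_ratSpan_self])
  simpa [← logHeight_congr span_eq] using S.logHeight_self_le a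

lemma rightStepBound_zero (S : IsContractingSeq x t α C) (hα : 0 < α) (hα' : α ≤ 1) :
    RightStepBound x α 0 := by
  refine ⟨(1 - α) * C + 2 * C, fun a p hrank _ ↦ ?_⟩
  have hap := finrank_ratSpan_le x a p
  obtain rfl : a = p := by
    by_contra hne
    have span_eq : ratSpan x (a + 1) (a + 1) = ratSpan x a p :=
      Submodule.eq_of_le_of_finrank_eq (spanIcc.mono (by lia) (by lia))
        (by rw [hrank, S.finrank_ratSpan_self])
    refine S.notMem_span_succ a ?_
    rw [← ratSpan_self, span_eq]
    exact spanIcc.mem le_rfl (by lia)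
  have notMem : intToRat (x a) ∉ ratSpan x (a + 1) (a + 1) := by
    rw [ratSpan_self]
    exact S.notMem_span_succ a
  rw [geomDefect.one_right, geomDefect.zero_right, mul_one]
  calc logHeight x a (a + 1)
      ≤ logHeight x (a + 1) (a + 1) - α * t (a + 1) + C := S.logHeight_le a.lt_succ_self notMem
    _ ≤ (1 - α) * t (a + 1) + 2 * C := by linarith [S.logHeight_self_le (a + 1)]
    _ ≤ (1 - α) * (logHeight x a a / α + C) + 2 * C := by
        have : 0 ≤ 1 - α := sub_nonneg.2 hα'
        gcongr
        exact (S.size_succ_le a).trans (by gcongr; exact S.le_logHeight_self a)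
    _ = (1 - α) / α * logHeight x a a + ((1 - α) * C + 2 * C) := by ring

lemma leftEndBound_succ (S : IsContractingSeq x t α C) (hα : 0 < α) (hs : 0 < geomDefect α k)
    (hs' : 0 ≤ geomDefect α (k + 1)) (hright : RightStepBound x α k)
    (hleft : LeftEndBound x t α k) : LeftEndBound x t α (k + 1) := by
  obtain ⟨K₁, hright⟩ := hright
  obtain ⟨K₂, hleft⟩ := hleft
  refine ⟨geomDefect α (k + 1) / (α * geomDefect α k) * K₂ + K₁, fun a b hrank ↦ ?_⟩
  have hab := finrank_ratSpan_le x a b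
  have ne : ratSpan x a a ≠ ratSpan x a b := fun h ↦ by
    have := h ▸ S.finrank_ratSpan_self a
    lia
  obtain ⟨p, hap, span_eq, notMem⟩ := spanIcc.exists_succ_eq_notMem (by lia) ne
  have finrank_p : Module.finrank ℚ (ratSpan x a p) = k + 1 := by
    have := spanIcc.finrank_succ_right (by lia) notMem
    rw [span_eq, hrank] at this
    lia
  calc logHeight x a b = logHeight x a (p + 1) := (logHeight_congr span_eq).symm
    _ ≤ geomDefect α (k + 1) / (α * geomDefect α k) * logHeight x a p + K₁ :=
      hright finrank_p notMem
    _ ≤ geomDefect α (k + 1) / (α * geomDefect α k) *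
          (geomDefect α k / α ^ k * t a + K₂) + K₁ := by gcongr; exact hleft finrank_p
    _ = geomDefect α (k + 1) / α ^ (k + 1) * t a +
          (geomDefect α (k + 1) / (α * geomDefect α k) * K₂ + K₁) := by field_simp; ring

lemma rightStepBound_succ (S : IsContractingSeq x t α C) (hα : 1 / 2 ≤ α)
    (hs : 0 < geomDefect α (k + 2)) (hright : RightStepBound x α k)
    (hleft : LeftEndBound x t α (k + 1)) : RightStepBound x α (k + 1) := by
  obtain ⟨K₁, hright⟩ := hright
  obtain ⟨K₂, hleft⟩ := hleft
  obtain ⟨K, hK⟩ := exists_le_of_submodular_of_contracting hα hs C K₁ K₂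
  refine ⟨K, fun a p hrank notMem ↦ ?_⟩
  have hap := finrank_ratSpan_le x a p
  obtain ⟨i, hai, hip, finrank_i, contracting⟩ := S.exists_logHeight_le (k := k + 1) <|
    (spanIcc.finrank_succ_right (by lia) notMem).trans (by rw [hrank])
  have notMem_i : intToRat (x (p + 1)) ∉ ratSpan x (i + 1) p := fun h ↦
    notMem (spanIcc.mono (by lia) le_rfl h)
  have finrank_i' : Module.finrank ℚ (ratSpan x (i + 1) p) = k + 1 := by
    have := spanIcc.finrank_succ_right (by lia) notMem_i
    rw [finrank_i] at this
    lia
  exact hK (logHeight_succ_right_add_le (by lia) (by lia) notMem) contracting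
    (hright finrank_i' notMem_i) (hleft finrank_i)

lemma rightStepBound_and_leftEndBound_succ (S : IsContractingSeq x t α C) (hα : 1 / 2 ≤ α)
    (k : ℕ) (hs : 0 < geomDefect α (k + 1)) :
    RightStepBound x α k ∧ LeftEndBound x t α (k + 1) := by
  have α_pos : 0 < α := by linarith
  induction k with
  | zero =>
    have hright := S.rightStepBound_zero α_pos (by rw [geomDefect.one_right] at hs; linarith)
    exact ⟨hright, S.leftEndBound_succ α_pos (by simp) hs.le hright S.leftEndBound_zero⟩
  | succ k ih =>
    have hs' : 0 < geomDefect α (k + 1) :=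
      hs.trans_le (geomDefect.antitone_right α_pos.le (k + 1).le_succ)
    obtain ⟨hright, hleft⟩ := ih hs'
    have hright' := S.rightStepBound_succ hα hs hright hleft
    exact ⟨hright', S.leftEndBound_succ α_pos hs' hs.le hright' hleft⟩

lemma leftEndBound (S : IsContractingSeq x t α C) (hα : 1 / 2 ≤ α)
    (hs : 0 < geomDefect α k) : LeftEndBound x t α k := by
  cases k with
  | zero => exact S.leftEndBound_zero
  | succ k => exact (S.rightStepBound_and_leftEndBound_succ hα k hs).2

theorem geomDefect_succ_nonneg (S : IsContractingSeq x t α C) (ht : Tendsto t atTop atTop)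
    (hspan : ∀ a, ∃ b, ratSpan x a b = ⊤) (hα : 1 / 2 ≤ α) (hcard : Fintype.card ι = k + 2)
    (hs : 0 < geomDefect α k) : 0 ≤ geomDefect α (k + 1) := by
  have : 0 < α := by linarith
  obtain ⟨K, hK⟩ := S.leftEndBound hα hs
  have size_bound : ∀ a, ∃ n ≥ a, 0 ≤ geomDefect α (k + 1) / α ^ k * t n + (K + C) := fun a ↦ by
    obtain ⟨b, span_eq⟩ := hspan a
    obtain ⟨i, hai, -, finrank_i, height_le⟩ := S.exists_logHeight_le (a := a) (b := b) (k := k)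
      (by rw [span_eq, finrank_top, Module.finrank_fintype_fun_eq_card, hcard])
    refine ⟨i + 1, by lia, ?_⟩
    calc 0 ≤ logHeight x (i + 1) b - α * t (i + 1) + C := (logHeight_nonneg x a b).trans height_le
      _ ≤ geomDefect α k / α ^ k * t (i + 1) + K - α * t (i + 1) + C := by
          gcongr
          exact hK finrank_i
      _ = geomDefect α (k + 1) / α ^ k * t (i + 1) + (K + C) := by
          rw [geomDefect.succ_right]
          field_simp
          ring
  by_contra! neg
  have tendsto_bot : Tendsto (fun n ↦ geomDefect α (k + 1) / α ^ k * t n + (K + C)) atTop atBot :=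
    tendsto_atBot_add_const_right _ _
      (ht.const_mul_atTop_of_neg (div_neg_of_neg_of_pos neg (by positivity)))
  obtain ⟨a, ha⟩ := eventually_atTop.1 (tendsto_bot.eventually_lt_atBot 0)
  obtain ⟨n, hna, hn⟩ := size_bound a
  exact (ha n hna).not_ge hn

end IsContractingSeq

end LogHeight

section BestApprox

lemma exists_strictMono_record {β : Type*} [LinearOrder β] (ψ : ℕ → β)
    (hψ : ∀ n, ∃ k, ψ k < ψ n) :
    ∃ q : ℕ → ℕ, StrictMono q ∧ StrictAnti (ψ ∘ q) ∧ ∀ n, ∀ k < q (n + 1), ψ (q n) ≤ ψ k := by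
  classical
  let q (n : ℕ) : ℕ := (fun k ↦ Nat.find (hψ k))^[n] 0
  have q_succ n : q (n + 1) = Nat.find (hψ (q n)) := Function.iterate_succ_apply' _ _ _
  have anti n : ψ (q (n + 1)) < ψ (q n) := q_succ n ▸ Nat.find_spec (hψ (q n))
  have record n k (hk : k < q (n + 1)) : ψ (q n) ≤ ψ k :=
    not_lt.1 (Nat.find_min (hψ (q n)) (q_succ n ▸ hk))
  refine ⟨q, strictMono_nat_of_lt_succ fun n ↦ ?_, strictAnti_nat_of_succ_lt anti, record⟩
  refine lt_of_le_of_ne (not_lt.1 fun hlt ↦ ?_) fun heq ↦ (anti n).ne (by rw [← heq])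
  cases n with
  | zero => exact Nat.not_lt_zero _ hlt
  | succ n => exact ((anti (n + 1)).trans (anti n)).not_ge (record n _ hlt)

variable {m : ℕ} {θ : Fin m → ℝ}

/-- The quality `max_j |z₀ θ_j - z_j|` of `z = (z₀, …, z_m)` as an approximation to `θ`. -/
noncomputable def approxError (θ : Fin m → ℝ) (z : Fin (m + 1) → ℤ) : ℝ :=
  ‖fun j ↦ (z 0 : ℝ) * θ j - z j.succ‖

lemma approxError_nonneg (θ : Fin m → ℝ) (z : Fin (m + 1) → ℤ) : 0 ≤ approxError θ z :=
  norm_nonneg _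

lemma abs_sub_succ_le_approxError (θ : Fin m → ℝ) (z : Fin (m + 1) → ℤ) (j : Fin m) :
    |z 0 * θ j - z j.succ| ≤ approxError θ z :=
  norm_le_pi_norm (fun j ↦ (z 0 : ℝ) * θ j - z j.succ) j

lemma abs_sub_le_approxError (θ : Fin m → ℝ) (z : Fin (m + 1) → ℤ) (i : Fin (m + 1)) :
    |z 0 * (Fin.cons 1 θ : Fin (m + 1) → ℝ) i - z i| ≤ approxError θ z := by
  cases i using Fin.cases with
  | zero => simpa using approxError_nonneg θ z
  | succ j => simpa using abs_sub_succ_le_approxError θ z j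

lemma approxError_of_eq_smul {y z : Fin (m + 1) → ℤ} {r : ℚ}
    (h : intToRat y = r • intToRat z) : approxError θ y = |(r : ℝ)| * approxError θ z := by
  have y_eq i : (y i : ℝ) = r * z i := mod_cast congrFun h i
  rw [approxError, approxError, ← Real.norm_eq_abs, ← norm_smul]
  congr 1
  ext j
  simp only [y_eq, Pi.smul_apply, smul_eq_mul]
  ring

lemma approxError_neg (θ : Fin m → ℝ) (z : Fin (m + 1) → ℤ) :
    approxError θ (-z) = approxError θ z := by
  simpa using approxError_of_eq_smul (θ := θ) (r := -1) (by simp : intToRat (-z) = _ • intToRat z)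

/-- The best approximation to `θ` among the integer points with first coordinate `q`. -/
noncomputable def nearestPoint (θ : Fin m → ℝ) (q : ℤ) : Fin (m + 1) → ℤ :=
  Fin.cons q fun j ↦ round (q * θ j)

lemma approxError_nearestPoint_le (θ : Fin m → ℝ) (z : Fin (m + 1) → ℤ) :
    approxError θ (nearestPoint θ (z 0)) ≤ approxError θ z :=
  (pi_norm_le_iff_of_nonneg (approxError_nonneg θ z)).2 fun j ↦
    (round_le _ _).trans (abs_sub_succ_le_approxError θ z j)

/-- A sequence of best approximations to `θ`: their first coordinates increase, their errors
decrease, and no point with first coordinate less than that of `x (n + 1)` is better than `x n`. -/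
structure IsBestApproxSeq (θ : Fin m → ℝ) (x : ℕ → Fin (m + 1) → ℤ) : Prop where
  pos n : 0 < x n 0
  strictMono : StrictMono fun n ↦ x n 0
  strictAnti : StrictAnti fun n ↦ approxError θ (x n)
  approxError_le {n : ℕ} {z : Fin (m + 1) → ℤ} (hpos : 0 < z 0) (hlt : z 0 < x (n + 1) 0) :
    approxError θ (x n) ≤ approxError θ z

lemma exists_isBestApproxSeq_of_forall_exists_lt
    (h : ∀ z : Fin (m + 1) → ℤ, 0 < z 0 → ∃ w : Fin (m + 1) → ℤ, 0 < w 0 ∧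
      approxError θ w < approxError θ z) :
    ∃ x, IsBestApproxSeq θ x := by
  let y (k : ℕ) : Fin (m + 1) → ℤ := nearestPoint θ (k + 1)
  have y_zero k : y k 0 = k + 1 := rfl
  have approxError_y_le {z : Fin (m + 1) → ℤ} (hz : 0 < z 0) :
      approxError θ (y (z 0 - 1).toNat) ≤ approxError θ z := by
    have : (((z 0 - 1).toNat : ℤ) + 1) = z 0 := by lia
    simpa only [y, this] using approxError_nearestPoint_le θ z
  have exists_lt (k : ℕ) : ∃ l, approxError θ (y l) < approxError θ (y k) := by
    obtain ⟨w, hw, lt⟩ := h (y k) (by rw [y_zero]; lia)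
    exact ⟨_, (approxError_y_le hw).trans_lt lt⟩
  obtain ⟨q, mono, anti, record⟩ := exists_strictMono_record _ exists_lt
  refine ⟨fun n ↦ y (q n), fun n ↦ ?_, fun i j hij ↦ ?_, anti, fun {n z} hpos hlt ↦ ?_⟩
  · simp only [y_zero]
    lia
  · have := mono hij
    simp only [y_zero]
    lia
  · rw [y_zero] at hlt
    exact (record n _ (by lia)).trans (approxError_y_le hpos)

namespace IsBestApproxSeq

variable {x : ℕ → Fin (m + 1) → ℤ}

lemma shift (hx : IsBestApproxSeq θ x) (N : ℕ) : IsBestApproxSeq θ fun n ↦ x (n + N) where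
  pos n := hx.pos _
  strictMono _ _ h := hx.strictMono (Nat.add_lt_add_right h N)
  strictAnti _ _ h := hx.strictAnti (Nat.add_lt_add_right h N)
  approxError_le {n _} hpos hlt := hx.approxError_le hpos (by rwa [add_right_comm] at hlt)

lemma approxError_pos (hx : IsBestApproxSeq θ x) (n : ℕ) : 0 < approxError θ (x n) :=
  (approxError_nonneg θ _).trans_lt (hx.strictAnti n.lt_succ_self)

lemma tendsto_atTop (hx : IsBestApproxSeq θ x) :
    Tendsto (fun n ↦ (x n 0 : ℝ)) atTop atTop := by
  have le (n : ℕ) : (n : ℤ) ≤ x n 0 := by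
    induction n with
    | zero => exact (hx.pos 0).le
    | succ n ih =>
      have := hx.strictMono n.lt_succ_self
      push_cast
      lia
  exact tendsto_atTop_mono (fun n ↦ by exact_mod_cast le n) tendsto_natCast_atTop_atTop

lemma le_abs_of_mem_span (hx : IsBestApproxSeq θ x) {n : ℕ} {y : Fin (m + 1) → ℤ} (hy : y ≠ 0)
    (hmem : intToRat y ∈ Submodule.span ℚ {intToRat (x n)}) : x n 0 ≤ |y 0| := by
  obtain ⟨r, hr⟩ := Submodule.mem_span_singleton.1 hmem
  have r_ne : r ≠ 0 := by
    rintro rfl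
    exact hy (intToRat_eq_zero.1 (by rw [← hr, zero_smul]))
  have y_zero : (y 0 : ℚ) = r * x n 0 := (congrFun hr 0).symm
  have x_pos : (0 : ℚ) < x n 0 := mod_cast hx.pos n
  have y_ne : y 0 ≠ 0 := by
    rw [← Int.cast_ne_zero (α := ℚ), y_zero]
    exact mul_ne_zero r_ne x_pos.ne'
  by_contra! hlt
  have abs_r_lt : |(r : ℝ)| < 1 := by
    have : |(y 0 : ℚ)| < x n 0 := mod_cast hlt
    rw [y_zero, abs_mul, abs_of_pos x_pos] at this
    exact_mod_cast (mul_lt_iff_lt_one_left x_pos).1 this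
  have error_lt : approxError θ y < approxError θ (x n) := by
    rw [approxError_of_eq_smul hr.symm]
    exact mul_lt_of_lt_one_left (hx.approxError_pos n) abs_r_lt
  have lt_succ : |y 0| < x (n + 1) 0 := hlt.trans (hx.strictMono n.lt_succ_self)
  rcases y_ne.lt_or_gt with neg | pos
  · rw [abs_of_neg neg] at lt_succ
    have := hx.approxError_le (z := -y) (by simpa using neg) lt_succ
    rw [approxError_neg] at this
    exact this.not_gt error_lt
  · rw [abs_of_pos pos] at lt_succ
    exact (hx.approxError_le pos lt_succ).not_gt error_lt

lemma ne_zero (hx : IsBestApproxSeq θ x) (n : ℕ) : x n ≠ 0 := fun h ↦ by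
  have := hx.pos n
  simp [h] at this

lemma notMem_span_succ (hx : IsBestApproxSeq θ x) (n : ℕ) :
    intToRat (x n) ∉ Submodule.span ℚ {intToRat (x (n + 1))} := fun hmem ↦ by
  have := hx.le_abs_of_mem_span (hx.ne_zero n) hmem
  rw [abs_of_pos (hx.pos n)] at this
  exact (hx.strictMono n.lt_succ_self).not_ge this

lemma abs_sub_div_mul_le (hx : IsBestApproxSeq θ x) (n : ℕ) (i : Fin (m + 1)) :
    |(x n i : ℝ) - x n 0 / x (n + 1) 0 * x (n + 1) i| ≤ 2 * approxError θ (x n) := by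
  have pos : (0 : ℝ) < x n 0 := mod_cast hx.pos n
  have pos' : (0 : ℝ) < x (n + 1) 0 := mod_cast hx.pos (n + 1)
  have ratio_le : (x n 0 / x (n + 1) 0 : ℝ) ≤ 1 :=
    (div_le_one pos').2 (mod_cast (hx.strictMono n.lt_succ_self).le)
  set c : ℝ := (Fin.cons 1 θ : Fin (m + 1) → ℝ) i
  have error_succ : |x (n + 1) 0 * c - x (n + 1) i| ≤ approxError θ (x n) :=
    (abs_sub_le_approxError θ _ i).trans (hx.strictAnti n.lt_succ_self).le
  calc |(x n i : ℝ) - x n 0 / x (n + 1) 0 * x (n + 1) i|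
      = |x n 0 / x (n + 1) 0 * (x (n + 1) 0 * c - x (n + 1) i) - (x n 0 * c - x n i)| := by
        congr 1
        field_simp
        ring
    _ ≤ |x n 0 / x (n + 1) 0 * (x (n + 1) 0 * c - x (n + 1) i)| + |x n 0 * c - x n i| :=
        abs_sub _ _
    _ ≤ 1 * approxError θ (x n) + approxError θ (x n) := by
        rw [abs_mul, abs_of_pos (div_pos pos pos')]
        gcongr
        exact abs_sub_le_approxError θ _ i
    _ = 2 * approxError θ (x n) := by ring

end IsBestApproxSeq

end BestApprox

section UniformApproximation

variable {m : ℕ} {θ : Fin m → ℝ} {α γ : ℝ} {x : ℕ → Fin (m + 1) → ℤ}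

namespace UnifApprox

lemma mono (h : UnifApprox θ γ) (hαγ : α ≤ γ) : UnifApprox θ α := by
  filter_upwards [h, eventually_ge_atTop 1] with Q ⟨q, a, hq, hqQ, ha⟩ hQ
  exact ⟨q, a, hq, hqQ, fun j ↦ (ha j).trans_le <|
    Real.rpow_le_rpow_of_exponent_le hQ (neg_le_neg hαγ)⟩

lemma eventually_exists_approxError_lt (h : UnifApprox θ γ) :
    ∀ᶠ Q : ℝ in atTop, ∃ z : Fin (m + 1) → ℤ, 0 < z 0 ∧ z 0 ≤ Q ∧ approxError θ z < Q ^ (-γ) := by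
  filter_upwards [h, eventually_gt_atTop 0] with Q ⟨q, a, hq, hqQ, ha⟩ hQ
  exact ⟨Fin.cons q a, hq, hqQ, (pi_norm_lt_iff (Real.rpow_pos_of_pos hQ _)).2 ha⟩

lemma exists_approxError_lt (h : UnifApprox θ γ) (hγ : 0 < γ) {ε : ℝ} (hε : 0 < ε) :
    ∃ z : Fin (m + 1) → ℤ, 0 < z 0 ∧ approxError θ z < ε := by
  obtain ⟨Q, ⟨z, hz, -, hlt⟩, hQ⟩ := (h.eventually_exists_approxError_lt.and
    ((tendsto_rpow_neg_atTop hγ).eventually (gt_mem_nhds hε))).exists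
  exact ⟨z, hz, hlt.trans hQ⟩

end UnifApprox

namespace TotallyIrrational

lemma irrational (hθ : TotallyIrrational θ) (j : Fin m) : Irrational (θ j) := by
  rintro ⟨r, hr⟩
  have relation : ∑ i, (Fin.cons (-r) (Pi.single j 1) : Fin (m + 1) → ℚ) i •
      (Fin.cons 1 θ : Fin (m + 1) → ℝ) i = 0 := by
    simp [Fin.sum_univ_succ, Rat.smul_def, Pi.single_apply, apply_ite Rat.cast, hr]
  simpa using Fintype.linearIndependent_iff.1 hθ _ relation j.succ

lemma approxError_pos [NeZero m] (hθ : TotallyIrrational θ) {z : Fin (m + 1) → ℤ} (hz : z 0 ≠ 0) :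
    0 < approxError θ z := by
  refine lt_of_lt_of_le (abs_pos.2 ?_) (abs_sub_succ_le_approxError θ z 0)
  exact (((hθ.irrational 0).intCast_mul hz).sub_intCast _).ne_zero

lemma exists_isBestApproxSeq [NeZero m] (hθ : TotallyIrrational θ) (h : UnifApprox θ γ)
    (hγ : 0 < γ) : ∃ x, IsBestApproxSeq θ x :=
  exists_isBestApproxSeq_of_forall_exists_lt fun _ hz ↦
    h.exists_approxError_lt hγ (hθ.approxError_pos hz.ne')

end TotallyIrrational

namespace IsBestApproxSeq

lemma eventually_approxError_le_rpow (hx : IsBestApproxSeq θ x) (h : UnifApprox θ α) :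
    ∀ᶠ n in atTop, approxError θ (x n) ≤ (x (n + 1) 0 : ℝ) ^ (-α) := by
  obtain ⟨Q₀, hQ₀⟩ := eventually_atTop.1 h.eventually_exists_approxError_lt
  filter_upwards [(hx.tendsto_atTop.comp (tendsto_add_atTop_nat 1)).eventually_gt_atTop Q₀]
    with n hn
  have x_ne : (x (n + 1) 0 : ℝ) ≠ 0 := mod_cast (hx.pos (n + 1)).ne'
  have continuous_left : ContinuousWithinAt (fun Q : ℝ ↦ Q ^ (-α)) (Set.Iio (x (n + 1) 0 : ℝ))
      (x (n + 1) 0) := (Real.continuousAt_rpow_const _ _ (.inl x_ne)).continuousWithinAt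
  refine ge_of_tendsto continuous_left ?_
  filter_upwards [Ioo_mem_nhdsLT hn] with Q ⟨hQ₀Q, hQx⟩
  obtain ⟨z, hz, hzQ, hlt⟩ := hQ₀ Q hQ₀Q.le
  exact (hx.approxError_le hz (mod_cast hzQ.trans_lt hQx)).trans hlt.le

lemma sum_mul_eq_zero (hx : IsBestApproxSeq θ x) {c : Fin (m + 1) → ℝ} {a : ℕ}
    (hc : ∀ n ≥ a, ∑ i, c i * x n i = 0) :
    ∑ i, c i * (Fin.cons 1 θ : Fin (m + 1) → ℝ) i = 0 := by
  set Λ := ∑ i, c i * (Fin.cons 1 θ : Fin (m + 1) → ℝ) i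
  have bound n (hn : a ≤ n) : x n 0 * |Λ| ≤ (∑ i, |c i|) * approxError θ (x 0) := by
    have pos : (0 : ℝ) < x n 0 := mod_cast hx.pos n
    calc x n 0 * |Λ|
        = |∑ i, c i * (x n 0 * (Fin.cons 1 θ : Fin (m + 1) → ℝ) i - x n i)| := by
          rw [← abs_of_pos pos, ← abs_mul, abs_of_pos pos, ← sub_zero (_ * Λ), ← hc n hn,
            Finset.mul_sum, ← Finset.sum_sub_distrib]
          exact congrArg abs (Finset.sum_congr rfl fun i _ ↦ by ring)
      _ ≤ ∑ i, |c i| * approxError θ (x 0) := by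
          refine (Finset.abs_sum_le_sum_abs _ _).trans (Finset.sum_le_sum fun i _ ↦ ?_)
          rw [abs_mul]
          gcongr
          exact (abs_sub_le_approxError θ _ i).trans (hx.strictAnti.antitone n.zero_le)
      _ = (∑ i, |c i|) * approxError θ (x 0) := (Finset.sum_mul _ _ _).symm
  by_contra hΛ
  obtain ⟨n, hlt, hn⟩ := ((hx.tendsto_atTop.atTop_mul_const (abs_pos.2 hΛ)).eventually_gt_atTop
    ((∑ i, |c i|) * approxError θ (x 0)) |>.and (eventually_ge_atTop a)).exists
  exact (bound n hn).not_gt hlt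

lemma eq_top_of_forall_mem (hx : IsBestApproxSeq θ x) (hθ : TotallyIrrational θ)
    {W : Submodule ℚ (Fin (m + 1) → ℚ)} {a : ℕ} (hW : ∀ n ≥ a, intToRat (x n) ∈ W) : W = ⊤ := by
  by_contra hne
  obtain ⟨f, f_ne, hWf⟩ := W.exists_le_ker_of_lt_top (lt_top_iff_ne_top.2 hne)
  set c : Fin (m + 1) → ℚ := fun i ↦ f fun j ↦ if i = j then 1 else 0
  have f_apply v : f v = ∑ i, v i * c i := f.pi_apply_eq_sum_univ v
  have relation : ∑ i, (c i : ℝ) * (Fin.cons 1 θ : Fin (m + 1) → ℝ) i = 0 := by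
    refine hx.sum_mul_eq_zero (a := a) fun n hn ↦ ?_
    have : ∑ i, (x n i : ℚ) * c i = 0 := (f_apply _).symm.trans (hWf (hW n hn))
    simp only [mul_comm (c _ : ℝ)]
    exact_mod_cast this
  have c_zero : ∀ i, c i = 0 :=
    Fintype.linearIndependent_iff.1 hθ c (by simpa only [Rat.smul_def] using relation)
  exact f_ne (LinearMap.ext fun v ↦ by simp [f_apply, c_zero])

lemma exists_ratSpan_eq_top (hx : IsBestApproxSeq θ x) (hθ : TotallyIrrational θ) (a : ℕ) :
    ∃ b, ratSpan x a b = ⊤ := by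
  obtain ⟨b, hb⟩ := monotone_stabilizes_iff_noetherian.2 inferInstance
    ⟨fun b ↦ ratSpan x a b, fun _ _ h ↦ spanIcc.mono le_rfl h⟩
  refine ⟨b, hx.eq_top_of_forall_mem hθ (a := max a b) fun n hn ↦ ?_⟩
  have stable : ratSpan x a b = ratSpan x a n := hb n (by lia)
  rw [stable]
  exact spanIcc.mem (by lia) le_rfl

end IsBestApproxSeq

end UniformApproximation

section Contraction

lemma norm_le_sqrt_card_mul {ι : Type*} [Fintype ι] {v : EuclideanSpace ℝ ι} {c : ℝ} (hc : 0 ≤ c)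
    (h : ∀ i, |v i| ≤ c) : ‖v‖ ≤ √(Fintype.card ι) * c := by
  rw [EuclideanSpace.norm_eq]
  refine Real.sqrt_le_iff.2 ⟨by positivity, ?_⟩
  rw [mul_pow, Real.sq_sqrt (Nat.cast_nonneg _), ← nsmul_eq_mul]
  exact Finset.sum_le_card_nsmul _ _ _ fun i _ ↦ pow_le_pow_left₀ (norm_nonneg _) (h i) 2

namespace IsBestApproxSeq

variable {m : ℕ} {θ : Fin m → ℝ} {x : ℕ → Fin (m + 1) → ℤ} {α K : ℝ}

lemma norm_intToEuclidean_le (hx : IsBestApproxSeq θ x) (n : ℕ) :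
    ‖intToEuclidean (x n)‖ ≤ √(m + 1) *
      (‖(Fin.cons 1 θ : Fin (m + 1) → ℝ)‖ + approxError θ (x 0)) * x n 0 := by
  have one_le : (1 : ℝ) ≤ x n 0 := mod_cast hx.pos n
  have error_le : approxError θ (x n) ≤ approxError θ (x 0) := hx.strictAnti.antitone n.zero_le
  set c : Fin (m + 1) → ℝ := Fin.cons 1 θ
  have coord_le i : |(x n i : ℝ)| ≤ (‖c‖ + approxError θ (x 0)) * x n 0 := by
    calc |(x n i : ℝ)| = |x n 0 * c i - (x n 0 * c i - x n i)| := by rw [sub_sub_cancel]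
      _ ≤ |x n 0 * c i| + |x n 0 * c i - x n i| := abs_sub _ _
      _ ≤ x n 0 * ‖c‖ + approxError θ (x 0) * x n 0 := by
        rw [abs_mul, abs_of_pos (one_pos.trans_le one_le)]
        gcongr
        · exact norm_le_pi_norm c i
        · exact ((abs_sub_le_approxError θ _ i).trans error_le).trans
            (le_mul_of_one_le_right (approxError_nonneg θ _) one_le)
      _ = (‖c‖ + approxError θ (x 0)) * x n 0 := by ring
  have := norm_le_sqrt_card_mul (v := intToEuclidean (x n)) ((abs_nonneg _).trans (coord_le 0))
    coord_le
  rwa [Fintype.card_fin, Nat.cast_add_one, ← mul_assoc] at this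

lemma infDist_realSpan_le (hx : IsBestApproxSeq θ x) {j b : ℕ} (hjb : j < b) :
    Metric.infDist (intToEuclidean (x j)) (realSpan (ratSpan x (j + 1) b)) ≤
      √(m + 1) * (2 * approxError θ (x j)) := by
  have mem : ((x j 0 / x (j + 1) 0 : ℝ) • intToEuclidean (x (j + 1))) ∈
      realSpan (ratSpan x (j + 1) b) :=
    Submodule.smul_mem _ _ (intToEuclidean_mem_realSpan (spanIcc.mem le_rfl hjb))
  refine (Metric.infDist_le_dist_of_mem mem).trans ?_
  rw [dist_eq_norm]
  have := norm_le_sqrt_card_mul (v := intToEuclidean (x j) - (x j 0 / x (j + 1) 0 : ℝ) •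
    intToEuclidean (x (j + 1))) (mul_nonneg zero_le_two (approxError_nonneg θ (x j)))
    (hx.abs_sub_div_mul_le j)
  rwa [Fintype.card_fin, Nat.cast_add_one] at this

lemma log_le_logHeight_self (hx : IsBestApproxSeq θ x) (n : ℕ) :
    Real.log (x n 0) ≤ logHeight x n n := by
  have finrank_eq : Module.finrank ℚ (ratSpan x n n) = 1 := by
    rw [ratSpan_self]
    exact finrank_span_singleton (intToRat_eq_zero.not.2 (hx.ne_zero n))
  obtain ⟨z, z_ne, z_mem, height_eq⟩ := exists_height_eq_norm finrank_eq
  rw [logHeight, height_eq]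
  refine Real.log_le_log (mod_cast hx.pos n) ?_
  calc (x n 0 : ℝ) ≤ |(z 0 : ℝ)| :=
        mod_cast hx.le_abs_of_mem_span z_ne (ratSpan_self x n ▸ z_mem)
    _ ≤ ‖intToEuclidean z‖ := PiLp.norm_apply_le (intToEuclidean z) 0

lemma logHeight_self_le (hx : IsBestApproxSeq θ x) (n : ℕ) :
    logHeight x n n ≤ Real.log (x n 0) + Real.log (√(m + 1) *
      (‖(Fin.cons 1 θ : Fin (m + 1) → ℝ)‖ + approxError θ (x 0))) := by
  have x_pos : (0 : ℝ) < x n 0 := mod_cast hx.pos n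
  have := hx.approxError_pos 0
  rw [logHeight, ratSpan_self, add_comm (Real.log _), ← Real.log_mul (by positivity) x_pos.ne']
  exact Real.log_le_log (height_pos _)
    ((height_span_singleton_le (hx.ne_zero n)).trans (hx.norm_intToEuclidean_le n))

lemma logHeight_le (hx : IsBestApproxSeq θ x) {j b : ℕ}
    (rate : approxError θ (x j) ≤ (x (j + 1) 0 : ℝ) ^ (-α)) (hjb : j < b)
    (hj : intToRat (x j) ∉ ratSpan x (j + 1) b) :
    logHeight x j b ≤
      logHeight x (j + 1) b - α * Real.log (x (j + 1) 0) + Real.log (√(m + 1) * 2) := by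
  have x_pos : (0 : ℝ) < x (j + 1) 0 := mod_cast hx.pos (j + 1)
  have height_le : height (ratSpan x j b) ≤
      height (ratSpan x (j + 1) b) * (x (j + 1) 0 ^ (-α) * (√(m + 1) * 2)) := by
    rw [ratSpan, spanIcc.eq_sup_left hjb.le]
    refine (height_sup_span_singleton_le hj).trans ?_
    have := height_pos (ratSpan x (j + 1) b)
    gcongr
    calc _ ≤ √(m + 1) * (2 * approxError θ (x j)) := hx.infDist_realSpan_le hjb
      _ ≤ √(m + 1) * (2 * (x (j + 1) 0 : ℝ) ^ (-α)) := by gcongr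
      _ = x (j + 1) 0 ^ (-α) * (√(m + 1) * 2) := by ring
  refine (Real.log_le_log (height_pos _) height_le).trans_eq ?_
  have rpow_pos := Real.rpow_pos_of_pos x_pos (-α)
  rw [Real.log_mul (height_pos _).ne' (by positivity), Real.log_mul rpow_pos.ne' (by positivity),
    Real.log_rpow x_pos, logHeight]
  ring

lemma exists_isContractingSeq (hx : IsBestApproxSeq θ x)
    (rate : ∀ n, approxError θ (x n) ≤ (x (n + 1) 0 : ℝ) ^ (-α))
    (growth : ∀ n, Real.log (x (n + 1) 0) ≤ Real.log (x n 0) / α + K) :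
    ∃ C, IsContractingSeq x (fun n ↦ Real.log (x n 0)) α C := by
  set A := Real.log (√(m + 1) *
    (‖(Fin.cons 1 θ : Fin (m + 1) → ℝ)‖ + approxError θ (x 0)))
  set B := Real.log (√(m + 1) * 2)
  have hA : A ≤ max A (max B K) := le_max_left _ _
  have hB : B ≤ max A (max B K) := (le_max_left _ _).trans (le_max_right _ _)
  have hK : K ≤ max A (max B K) := (le_max_right _ _).trans (le_max_right _ _)
  exact ⟨max A (max B K), {
    notMem_span_succ := hx.notMem_span_succ
    le_logHeight_self := hx.log_le_logHeight_self
    logHeight_self_le n := (hx.logHeight_self_le n).trans (by gcongr)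
    size_succ_le n := (growth n).trans (by gcongr)
    logHeight_le hjb hj := (hx.logHeight_le (rate _) hjb hj).trans (by gcongr) }⟩

end IsBestApproxSeq

end Contraction

section Paraboloid

variable {d : ℕ}

/-- The quadratic form `z₁² + ⋯ + z_d² - z₀ z_{d+1}`, which vanishes at `(1, ξ, ∑ i, ξ_i²)`. -/
def paraboloidForm (z : Fin (d + 2) → ℤ) : ℤ :=
  ∑ i : Fin d, z i.castSucc.succ ^ 2 - z 0 * z (Fin.last d).succ

lemma dvd_sum_sq_of_paraboloidForm_eq_zero {x : Fin (d + 2) → ℤ} (hx : paraboloidForm x = 0)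
    (y : Fin (d + 2) → ℤ) :
    x 0 ∣ ∑ i : Fin d, (y 0 * x i.castSucc.succ - x 0 * y i.castSucc.succ) ^ 2 := by
  have expand : ∑ i : Fin d, (y 0 * x i.castSucc.succ - x 0 * y i.castSucc.succ) ^ 2 =
      y 0 ^ 2 * ∑ i : Fin d, x i.castSucc.succ ^ 2 +
        x 0 * ∑ i : Fin d, (x 0 * y i.castSucc.succ ^ 2 -
          2 * y 0 * x i.castSucc.succ * y i.castSucc.succ) := by
    simp only [Finset.mul_sum, ← Finset.sum_add_distrib]
    exact Finset.sum_congr rfl fun i _ ↦ by ring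
  rw [expand, sub_eq_zero.1 hx]
  exact dvd_add (dvd_mul_of_dvd_right (dvd_mul_right _ _) _) (dvd_mul_right _ _)

lemma dvd_sq_last_of_paraboloidForm_eq_zero {x y : Fin (d + 2) → ℤ} (hx : paraboloidForm x = 0)
    (h0 : x 0 ≠ 0) (hy : ∀ i : Fin d, y 0 * x i.castSucc.succ = x 0 * y i.castSucc.succ) :
    x 0 ∣ (y 0 * x (Fin.last d).succ - x 0 * y (Fin.last d).succ) ^ 2 := by
  have dvd : x 0 ∣ y 0 ^ 2 * x (Fin.last d).succ := by
    refine ⟨∑ i : Fin d, y i.castSucc.succ ^ 2, mul_left_cancel₀ h0 ?_⟩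
    calc x 0 * (y 0 ^ 2 * x (Fin.last d).succ)
        = ∑ i : Fin d, (y 0 * x i.castSucc.succ) ^ 2 := by
          rw [mul_left_comm, ← sub_eq_zero.1 hx, Finset.mul_sum]
          exact Finset.sum_congr rfl fun i _ ↦ (mul_pow _ _ _).symm
      _ = x 0 * (x 0 * ∑ i : Fin d, y i.castSucc.succ ^ 2) := by
          simp only [hy, mul_pow, ← Finset.mul_sum, sq (x 0), mul_assoc]
  have expand : (y 0 * x (Fin.last d).succ - x 0 * y (Fin.last d).succ) ^ 2 =
      y 0 ^ 2 * x (Fin.last d).succ * x (Fin.last d).succ + x 0 * (x 0 * y (Fin.last d).succ ^ 2 -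
        2 * y 0 * x (Fin.last d).succ * y (Fin.last d).succ) := by ring
  rw [expand]
  exact dvd_add (dvd_mul_of_dvd_left dvd _) (dvd_mul_right _ _)

lemma smul_eq_smul_of_paraboloidForm_eq_zero {x y : Fin (d + 2) → ℤ} (hx : paraboloidForm x = 0)
    (hpos : 0 < x 0) (hlt : ∑ i, (y 0 * x i - x 0 * y i) ^ 2 < x 0) : y 0 • x = x 0 • y := by
  have mul_zero_eq : y 0 * x 0 = x 0 * y 0 := mul_comm _ _
  rw [Fin.sum_univ_succ, Fin.sum_univ_castSucc, mul_zero_eq, sub_self] at hlt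
  set S := ∑ i : Fin d, (y 0 * x i.castSucc.succ - x 0 * y i.castSucc.succ) ^ 2 with hS
  set T := (y 0 * x (Fin.last d).succ - x 0 * y (Fin.last d).succ) ^ 2 with hT
  have S_nonneg : 0 ≤ S := Finset.sum_nonneg fun _ _ ↦ sq_nonneg _
  have T_nonneg : 0 ≤ T := sq_nonneg _
  have S_zero : S = 0 := Int.eq_zero_of_dvd_of_nonneg_of_lt S_nonneg (by lia)
    (dvd_sum_sq_of_paraboloidForm_eq_zero hx y)
  have mul_middle_eq (i : Fin d) : y 0 * x i.castSucc.succ = x 0 * y i.castSucc.succ := by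
    have := (Finset.sum_eq_zero_iff_of_nonneg fun _ _ ↦ sq_nonneg _).1 (hS.symm.trans S_zero) i
      (Finset.mem_univ i)
    exact sub_eq_zero.1 (sq_eq_zero_iff.1 this)
  have T_zero : T = 0 := Int.eq_zero_of_dvd_of_nonneg_of_lt T_nonneg (by lia)
    (dvd_sq_last_of_paraboloidForm_eq_zero hx hpos.ne' mul_middle_eq)
  have mul_last_eq : y 0 * x (Fin.last d).succ = x 0 * y (Fin.last d).succ :=
    sub_eq_zero.1 (sq_eq_zero_iff.1 (hT.symm.trans T_zero))
  exact funext (Fin.cases mul_zero_eq (Fin.lastCases mul_last_eq mul_middle_eq))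

lemma abs_sq_sub_sq_le {q r a e : ℝ} (h : |q * r - a| ≤ e) (he : e ≤ 1) (hq : 1 ≤ q) :
    |a ^ 2 - (q * r) ^ 2| ≤ q * e * (2 * |r| + 1) := by
  have factor_le : |q * r + a| ≤ q * (2 * |r| + 1) := by
    calc |q * r + a| = |2 * q * r - (q * r - a)| := by ring_nf
      _ ≤ |2 * q * r| + |q * r - a| := abs_sub _ _
      _ ≤ 2 * q * |r| + q := by
        rw [abs_mul, abs_of_pos (by linarith : 0 < 2 * q)]
        linarith
      _ = q * (2 * |r| + 1) := by ring
  calc |a ^ 2 - (q * r) ^ 2| = |q * r - a| * |q * r + a| := by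
        rw [abs_sub_comm, sq_sub_sq, abs_mul, mul_comm]
    _ ≤ e * (q * (2 * |r| + 1)) := by gcongr; exact (abs_nonneg _).trans h
    _ = q * e * (2 * |r| + 1) := by ring

lemma abs_paraboloidForm_le (ξ : Fin d → ℝ) {z : Fin (d + 2) → ℤ} (hz : 0 < z 0)
    (he : approxError (Fin.snoc ξ (∑ i, ξ i ^ 2)) z ≤ 1) :
    |(paraboloidForm z : ℝ)| ≤
      z 0 * approxError (Fin.snoc ξ (∑ i, ξ i ^ 2)) z * (2 * ∑ i, |ξ i| + d + 1) := by
  set e := approxError (Fin.snoc ξ (∑ i, ξ i ^ 2)) z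
  have one_le : (1 : ℝ) ≤ z 0 := mod_cast hz
  have error_middle (i : Fin d) : |z 0 * ξ i - z i.castSucc.succ| ≤ e := by
    simpa using abs_sub_succ_le_approxError (Fin.snoc ξ (∑ i, ξ i ^ 2)) z i.castSucc
  have error_last : |z 0 * ∑ i, ξ i ^ 2 - z (Fin.last d).succ| ≤ e := by
    simpa using abs_sub_succ_le_approxError (Fin.snoc ξ (∑ i, ξ i ^ 2)) z (Fin.last d)
  calc |(paraboloidForm z : ℝ)|
      = |∑ i : Fin d, ((z i.castSucc.succ : ℝ) ^ 2 - (z 0 * ξ i) ^ 2) +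
          z 0 * (z 0 * ∑ i, ξ i ^ 2 - z (Fin.last d).succ)| := by
        simp only [paraboloidForm, mul_pow, Finset.sum_sub_distrib, ← Finset.mul_sum]
        push_cast
        congr 1
        ring
    _ ≤ ∑ i : Fin d, |(z i.castSucc.succ : ℝ) ^ 2 - (z 0 * ξ i) ^ 2| +
          |z 0 * (z 0 * ∑ i, ξ i ^ 2 - z (Fin.last d).succ)| :=
        (abs_add_le _ _).trans (by gcongr; exact Finset.abs_sum_le_sum_abs _ _)
    _ ≤ ∑ i : Fin d, z 0 * e * (2 * |ξ i| + 1) + z 0 * e := by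
        rw [abs_mul, abs_of_pos (one_pos.trans_le one_le)]
        gcongr with i
        exact abs_sq_sub_sq_le (error_middle i) he one_le
    _ = z 0 * e * (2 * ∑ i, |ξ i| + d + 1) := by
        rw [← Finset.mul_sum, Finset.sum_add_distrib, ← Finset.mul_sum]
        simp only [Finset.sum_const, Finset.card_univ, Fintype.card_fin, nsmul_eq_mul, mul_one]
        ring

namespace IsBestApproxSeq

variable {θ : Fin (d + 1) → ℝ} {x : ℕ → Fin (d + 2) → ℤ} {α : ℝ} {n : ℕ}

lemma sum_sq_lt (hx : IsBestApproxSeq θ x)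
    (hsmall : 4 * (d + 2) * (x (n + 1) 0 * approxError θ (x n) ^ 2) < 1) :
    ∑ i, (x n 0 * x (n + 1) i - x (n + 1) 0 * x n i) ^ 2 < x (n + 1) 0 := by
  have pos : (0 : ℝ) < x (n + 1) 0 := mod_cast hx.pos (n + 1)
  have term_le i : ((x n 0 * x (n + 1) i - x (n + 1) 0 * x n i : ℝ)) ^ 2 ≤
      (x (n + 1) 0 * (2 * approxError θ (x n))) ^ 2 := by
    rw [← sq_abs]
    refine pow_le_pow_left₀ (abs_nonneg _) ?_ 2
    calc |(x n 0 * x (n + 1) i - x (n + 1) 0 * x n i : ℝ)|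
        = x (n + 1) 0 * |(x n i : ℝ) - x n 0 / x (n + 1) 0 * x (n + 1) i| := by
          nth_rw 2 [← abs_of_pos pos]
          rw [← abs_mul, abs_sub_comm]
          field_simp
      _ ≤ x (n + 1) 0 * (2 * approxError θ (x n)) := by
          gcongr
          exact hx.abs_sub_div_mul_le n i
  have sum_lt : ∑ i, (x n 0 * x (n + 1) i - x (n + 1) 0 * x n i : ℝ) ^ 2 < x (n + 1) 0 := by
    calc _ ≤ ∑ _ : Fin (d + 2), (x (n + 1) 0 * (2 * approxError θ (x n))) ^ 2 :=
          Finset.sum_le_sum fun i _ ↦ term_le i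
      _ = 4 * (d + 2) * (x (n + 1) 0 * approxError θ (x n) ^ 2) * x (n + 1) 0 := by
          simp only [Finset.sum_const, Finset.card_univ, Fintype.card_fin, nsmul_eq_mul,
            Nat.cast_add, Nat.cast_ofNat]
          ring
      _ < x (n + 1) 0 := mul_lt_of_lt_one_left pos hsmall
  exact_mod_cast sum_lt

lemma paraboloidForm_succ_ne_zero (hx : IsBestApproxSeq θ x)
    (hsmall : 4 * (d + 2) * (x (n + 1) 0 * approxError θ (x n) ^ 2) < 1) :
    paraboloidForm (x (n + 1)) ≠ 0 := fun hzero ↦ by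
  have smul_eq := smul_eq_smul_of_paraboloidForm_eq_zero hzero (hx.pos _) (hx.sum_sq_lt hsmall)
  refine hx.notMem_span_succ n ?_
  rw [← zsmul_mem_iff _ (hx.pos (n + 1)).ne', ← map_zsmul, ← smul_eq, map_zsmul]
  exact zsmul_mem (Submodule.mem_span_singleton_self _) _

lemma eventually_paraboloidForm_ne_zero (hx : IsBestApproxSeq θ x) (hα : 1 / 2 < α)
    (rate : ∀ᶠ n in atTop, approxError θ (x n) ≤ (x (n + 1) 0 : ℝ) ^ (-α)) :
    ∀ᶠ n in atTop, paraboloidForm (x n) ≠ 0 := by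
  have small : Tendsto (fun Q : ℝ ↦ 4 * (d + 2) * Q ^ (-(2 * α - 1))) atTop (nhds 0) := by
    simpa using (tendsto_rpow_neg_atTop (by linarith : 0 < 2 * α - 1)).const_mul (4 * (d + 2 : ℝ))
  rw [← map_add_atTop_eq_nat 1, eventually_map]
  filter_upwards [rate, (hx.tendsto_atTop.comp (tendsto_add_atTop_nat 1)).eventually
    (small.eventually (gt_mem_nhds one_pos))] with n hn hsmall
  refine hx.paraboloidForm_succ_ne_zero (lt_of_le_of_lt ?_ hsmall)
  have pos : (0 : ℝ) < x (n + 1) 0 := mod_cast hx.pos (n + 1)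
  gcongr
  calc x (n + 1) 0 * approxError θ (x n) ^ 2
      ≤ x (n + 1) 0 * ((x (n + 1) 0 : ℝ) ^ (-α)) ^ 2 := by
        gcongr
        exact approxError_nonneg θ _
    _ = (x (n + 1) 0 : ℝ) ^ (-(2 * α - 1)) := by
        rw [← Real.rpow_mul_natCast pos.le, ← Real.rpow_one_add' pos.le]
        · push_cast
          ring_nf
        · push_cast
          linarith

lemma exists_eventually_log_succ_le {ξ : Fin d → ℝ}
    (hx : IsBestApproxSeq (Fin.snoc ξ (∑ i, ξ i ^ 2)) x) (hα : 1 / 2 < α)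
    (rate : ∀ᶠ n in atTop,
      approxError (Fin.snoc ξ (∑ i, ξ i ^ 2)) (x n) ≤ (x (n + 1) 0 : ℝ) ^ (-α)) :
    ∃ K, ∀ᶠ n in atTop, Real.log (x (n + 1) 0) ≤ Real.log (x n 0) / α + K := by
  set M : ℝ := 2 * ∑ i, |ξ i| + d + 1
  have M_pos : 0 < M := by positivity
  have α_pos : 0 < α := by linarith
  refine ⟨Real.log M / α, ?_⟩
  filter_upwards [rate, hx.eventually_paraboloidForm_ne_zero hα rate] with n hn hne
  have pos : (0 : ℝ) < x n 0 := mod_cast hx.pos n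
  have one_le : (1 : ℝ) ≤ x (n + 1) 0 := mod_cast hx.pos (n + 1)
  have pos' : (0 : ℝ) < x (n + 1) 0 := one_pos.trans_le one_le
  have error_le_one : approxError (Fin.snoc ξ (∑ i, ξ i ^ 2)) (x n) ≤ 1 :=
    hn.trans (Real.rpow_le_one_of_one_le_of_nonpos one_le (neg_nonpos.2 α_pos.le))
  have rpow_le : (x (n + 1) 0 : ℝ) ^ α ≤ x n 0 * M := by
    have one_le_mul : 1 ≤ x n 0 * (x (n + 1) 0 : ℝ) ^ (-α) * M :=
      calc (1 : ℝ) ≤ |(paraboloidForm (x n) : ℝ)| := mod_cast Int.one_le_abs hne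
        _ ≤ _ := abs_paraboloidForm_le ξ (hx.pos n) error_le_one
        _ ≤ x n 0 * (x (n + 1) 0 : ℝ) ^ (-α) * M := by gcongr
    rwa [Real.rpow_neg pos'.le, mul_right_comm, ← div_eq_mul_inv,
      one_le_div (Real.rpow_pos_of_pos pos' _)] at one_le_mul
  rw [← add_div, le_div_iff₀' α_pos, ← Real.log_rpow pos', ← Real.log_mul pos.ne' M_pos.ne']
  exact Real.log_le_log (Real.rpow_pos_of_pos pos' _) rpow_le

end IsBestApproxSeq

end Paraboloid

/-- Theorem 1: if `Ξ = (ξ₁,…,ξ_d, ξ₁²+⋯+ξ_d²)` is totally irrational then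
`ω̂(Ξ) ≤ H_d`, where `H_d` is the unique positive root of `x^{d+1}+⋯+x = 1`. -/
theorem uniform_exponent_le_of_sum_of_squares
    (d : ℕ) (hd : 1 ≤ d) (ξ : Fin d → ℝ)
    (hirr : TotallyIrrational (Fin.snoc ξ (∑ i, ξ i ^ 2)))
    (H : ℝ) (hHpos : 0 < H)
    (hHroot : ∑ k ∈ Finset.range (d + 1), H ^ (k + 1) = 1) :
    ∀ γ : ℝ, UnifApprox (Fin.snoc ξ (∑ i, ξ i ^ 2)) γ → γ ≤ H := by
  intro γ hγ
  by_contra! hHγ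
  obtain ⟨α, half_lt, hαγ, defect_pos, defect_neg⟩ :=
    geomDefect.exists_gt_root hHpos hHγ (sub_eq_zero.2 hHroot.symm)
  have hα : UnifApprox (Fin.snoc ξ (∑ i, ξ i ^ 2)) α := hγ.mono hαγ.le
  obtain ⟨x, hx⟩ := hirr.exists_isBestApproxSeq hα (by linarith)
  have rate := hx.eventually_approxError_le_rpow hα
  obtain ⟨K, growth⟩ := hx.exists_eventually_log_succ_le half_lt rate
  obtain ⟨N, hN⟩ := eventually_atTop.1 (rate.and growth)
  have tail := hx.shift N
  have rate_growth n := (add_right_comm n N 1) ▸ hN (n + N) (N.le_add_left n)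
  obtain ⟨C, contracting⟩ := tail.exists_isContractingSeq (fun n ↦ (rate_growth n).1)
    fun n ↦ (rate_growth n).2
  exact defect_neg.not_ge <| contracting.geomDefect_succ_nonneg
    (Real.tendsto_log_atTop.comp tail.tendsto_atTop) (tail.exists_ratSpan_eq_top hirr)
    half_lt.le (Fintype.card_fin _) defect_pos
end

section
/- Let d ≥ 2 and let ξ ∈ ℝ^d \ ℚ^d satisfy ξ₁² + ⋯ + ξ_d² = 1. Then for every ε > 0 there exist arbitrarily large T such that T · Ψ_ξ(T) ≥ 1/4 − ε. -/
/-- `Ψ_ξ(T)`: the minimum of `|qξ - a|²/q` over integer vectors `(q, a₁, …, a_d)` with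
`1 ≤ q ≤ T` and `a₁²+⋯+a_d² = q²`. -/
noncomputable def PsiSphere {d : ℕ} (ξ : Fin d → ℝ) (T : ℝ) : ℝ :=
  sInf {v : ℝ | ∃ (q : ℤ) (a : Fin d → ℤ),
    1 ≤ q ∧ (q : ℝ) ≤ T ∧ (∑ i, (a i) ^ 2) = q ^ 2 ∧
    v = (∑ i, ((q : ℝ) * ξ i - (a i : ℝ)) ^ 2) / (q : ℝ)}

/-!
Two integer points `x = (q, a)` and `y = (q', a')` of the light cone satisfy
`|a/q - a'/q'|² = 2 m / (q q')` with `m = q q' - a · a'` a nonnegative integer. If `m ≠ 0`, then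
`m ≥ 1`, and comparing both points with `ξ` gives `1 ≤ q' E(x) + q E(y)`, where `E` is the error
`|qξ - a|²/q`. Hence a point `y` improving on the best `x` found up to `T` has
`q' > 1 / (2 E(x)) = 1 / (2 Ψ_ξ(T))`, so that `Ψ_ξ` does not drop between `T` and
`T' = max T (1 / (2 Ψ_ξ(T)))`, and therefore `T' Ψ_ξ(T') ≥ 1/2`.
-/

open Filter

/-- An integer point `(q, a)` with `q ≥ 1` of the light cone `|a|² = q²`, representing the point
`a / q` of the unit sphere. It need not be primitive. -/
@[ext]
structure ConePoint (ι : Type*) [Fintype ι] where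
  /-- The common denominator `q`. -/
  height : ℤ
  /-- The numerators `a`. -/
  coord : ι → ℤ
  one_le_height : 1 ≤ height
  sum_coord_sq : ∑ i, coord i ^ 2 = height ^ 2

namespace ConePoint

variable {ι : Type*} [Fintype ι]

theorem height_pos (x : ConePoint ι) : 0 < x.height :=
  x.one_le_height

theorem cast_height_pos (x : ConePoint ι) : (0 : ℝ) < x.height :=
  mod_cast x.height_pos

theorem abs_coord_le (x : ConePoint ι) (i : ι) : |x.coord i| ≤ x.height := by
  refine abs_le_of_sq_le_sq ?_ x.height_pos.le
  rw [← x.sum_coord_sq]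
  exact Finset.single_le_sum (f := fun j => x.coord j ^ 2) (fun _ _ => sq_nonneg _)
    (Finset.mem_univ i)

theorem finite_setOf_height_le (T : ℝ) : {x : ConePoint ι | (x.height : ℝ) ≤ T}.Finite := by
  classical
  let box : Set (ℤ × (ι → ℤ)) := Set.Icc (1, fun _ => -⌊T⌋) (⌊T⌋, fun _ => ⌊T⌋)
  refine Set.Finite.of_injOn (t := box) (f := fun x => (x.height, x.coord)) ?_ ?_
    (Set.finite_Icc _ _)
  · intro x hx
    have height_le : x.height ≤ ⌊T⌋ := Int.le_floor.2 hx
    have coord_mem (i : ι) := abs_le.1 ((x.abs_coord_le i).trans height_le)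
    exact ⟨⟨x.one_le_height, fun i => (coord_mem i).1⟩, height_le, fun i => (coord_mem i).2⟩
  · intro x _ y _ hxy
    exact ConePoint.ext (congrArg Prod.fst hxy) (congrArg Prod.snd hxy)

theorem exists_height_eq_one [Nonempty ι] : ∃ x : ConePoint ι, x.height = 1 := by
  classical
  obtain ⟨i⟩ := ‹Nonempty ι›
  exact ⟨⟨1, Pi.single i 1, le_rfl, by simp [Pi.single_apply, ite_pow]⟩, rfl⟩

/-- The error `|qξ - a|² / q` of `(q, a)` as an approximation to `ξ`, whose minimum over
`q ≤ T` is `Ψ_ξ(T)`. -/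
noncomputable def error (ξ : ι → ℝ) (x : ConePoint ι) : ℝ :=
  (∑ i, (x.height * ξ i - x.coord i) ^ 2) / x.height

theorem height_mul_error (ξ : ι → ℝ) (x : ConePoint ι) :
    x.height * x.error ξ = ∑ i, (x.height * ξ i - x.coord i) ^ 2 :=
  mul_div_cancel₀ _ x.cast_height_pos.ne'

theorem error_nonneg (ξ : ι → ℝ) (x : ConePoint ι) : 0 ≤ x.error ξ :=
  div_nonneg (Finset.sum_nonneg fun _ _ => sq_nonneg _) x.cast_height_pos.le

theorem error_eq_zero_iff {ξ : ι → ℝ} {x : ConePoint ι} :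
    x.error ξ = 0 ↔ ∀ i, (x.coord i / x.height : ℝ) = ξ i := by
  have hx := x.cast_height_pos.ne'
  rw [error, div_eq_zero_iff, or_iff_left hx,
    Finset.sum_eq_zero_iff_of_nonneg fun _ _ => sq_nonneg _]
  simp only [Finset.mem_univ, forall_const, sq_eq_zero_iff, sub_eq_zero, div_eq_iff hx]
  exact forall_congr' fun i => by rw [mul_comm, eq_comm]

theorem error_pos {ξ : ι → ℝ} (hirr : ¬ ∃ r : ι → ℚ, (fun i => (r i : ℝ)) = ξ)
    (x : ConePoint ι) : 0 < x.error ξ := by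
  refine (x.error_nonneg ξ).lt_of_ne' fun error_eq_zero => hirr ?_
  refine ⟨fun i => x.coord i / x.height, funext fun i => ?_⟩
  exact_mod_cast error_eq_zero_iff.1 error_eq_zero i

/-- The Lorentz pairing `q q' - a · a'` of two points of the light cone. Its vanishing means that
they represent the same point of the sphere. -/
def lorentz (x y : ConePoint ι) : ℤ :=
  x.height * y.height - ∑ i, x.coord i * y.coord i

theorem sum_sq_cross_sub (x y : ConePoint ι) :
    ∑ i, (y.height * x.coord i - x.height * y.coord i) ^ 2
      = 2 * (x.height * y.height) * x.lorentz y := by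
  have expand (i : ι) : (y.height * x.coord i - x.height * y.coord i) ^ 2
      = y.height ^ 2 * x.coord i ^ 2 + x.height ^ 2 * y.coord i ^ 2
        - 2 * (x.height * y.height) * (x.coord i * y.coord i) := by ring
  simp only [expand, Finset.sum_sub_distrib, Finset.sum_add_distrib, ← Finset.mul_sum,
    sum_coord_sq, lorentz]
  ring

theorem lorentz_nonneg (x y : ConePoint ι) : 0 ≤ x.lorentz y := by
  have heights_pos : 0 < 2 * (x.height * y.height) :=
    mul_pos two_pos (mul_pos x.height_pos y.height_pos)
  refine nonneg_of_mul_nonneg_right ?_ heights_pos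
  rw [← sum_sq_cross_sub]
  exact Finset.sum_nonneg fun _ _ => sq_nonneg _

theorem lorentz_le (ξ : ι → ℝ) (x y : ConePoint ι) :
    (x.lorentz y : ℝ) ≤ y.height * x.error ξ + x.height * y.error ξ := by
  have hx := x.cast_height_pos
  have hy := y.cast_height_pos
  have cross_sub_eq (i : ι) : (y.height * x.coord i - x.height * y.coord i : ℝ)
      = x.height * (y.height * ξ i - y.coord i)
        + -(y.height * (x.height * ξ i - x.coord i)) := by ring
  refine le_of_mul_le_mul_left ?_ (by positivity : (0 : ℝ) < 2 * (x.height * y.height))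
  calc (2 * (x.height * y.height) * x.lorentz y : ℝ)
      = ∑ i, (y.height * x.coord i - x.height * y.coord i : ℝ) ^ 2 :=
        mod_cast (sum_sq_cross_sub x y).symm
    _ ≤ ∑ i, 2 * ((x.height * (y.height * ξ i - y.coord i)) ^ 2
          + (-(y.height * (x.height * ξ i - x.coord i))) ^ 2) :=
        Finset.sum_le_sum fun i _ => cross_sub_eq i ▸ add_sq_le
    _ = 2 * (x.height ^ 2 * (y.height * y.error ξ) + y.height ^ 2 * (x.height * x.error ξ)) := by
        simp only [height_mul_error, neg_sq, mul_pow, ← Finset.mul_sum, Finset.sum_add_distrib]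
    _ = 2 * (x.height * y.height) * (y.height * x.error ξ + x.height * y.error ξ) := by ring

theorem height_mul_error_eq_of_lorentz_eq_zero (ξ : ι → ℝ) {x y : ConePoint ι}
    (hxy : x.lorentz y = 0) : y.height * x.error ξ = x.height * y.error ξ := by
  have sum_sq_eq_zero : ∑ i, (y.height * x.coord i - x.height * y.coord i) ^ 2 = 0 := by
    rw [sum_sq_cross_sub, hxy, mul_zero]
  rw [Finset.sum_eq_zero_iff_of_nonneg fun _ _ => sq_nonneg _] at sum_sq_eq_zero
  have residual_eq (i : ι) : (y.height * (x.height * ξ i - x.coord i) : ℝ)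
      = x.height * (y.height * ξ i - y.coord i) := by
    have cross_eq : (y.height * x.coord i : ℝ) = x.height * y.coord i :=
      mod_cast sub_eq_zero.1 (sq_eq_zero_iff.1 (sum_sq_eq_zero i (Finset.mem_univ i)))
    linear_combination -cross_eq
  refine mul_left_cancel₀ (mul_pos x.cast_height_pos y.cast_height_pos).ne' ?_
  calc (x.height * y.height * (y.height * x.error ξ) : ℝ)
      = ∑ i, (y.height * (x.height * ξ i - x.coord i)) ^ 2 := by
        simp only [mul_pow, ← Finset.mul_sum, ← height_mul_error]; ring
    _ = ∑ i, (x.height * (y.height * ξ i - y.coord i)) ^ 2 :=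
        Finset.sum_congr rfl fun i _ => by rw [residual_eq]
    _ = x.height * y.height * (x.height * y.error ξ) := by
        simp only [mul_pow, ← Finset.mul_sum, ← height_mul_error]; ring

theorem half_lt_height_mul_error {ξ : ι → ℝ} {x y : ConePoint ι}
    (hheight : x.height ≤ y.height) (herror : y.error ξ < x.error ξ) :
    1 / 2 < y.height * x.error ξ := by
  have smaller : x.height * y.error ξ < y.height * x.error ξ :=
    mul_lt_mul' (mod_cast hheight) herror (y.error_nonneg ξ) y.cast_height_pos
  have lorentz_ne_zero : x.lorentz y ≠ 0 := fun h =>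
    smaller.ne' (height_mul_error_eq_of_lorentz_eq_zero ξ h)
  have one_le_lorentz : (1 : ℝ) ≤ x.lorentz y :=
    mod_cast (x.lorentz_nonneg y).lt_of_ne' lorentz_ne_zero
  linarith [lorentz_le ξ x y]

end ConePoint

section PsiSphere

variable {d : ℕ} {ξ : Fin d → ℝ} {T : ℝ}

theorem PsiSphere_eq_sInf_image (ξ : Fin d → ℝ) (T : ℝ) :
    PsiSphere ξ T = sInf (ConePoint.error ξ '' {x | (x.height : ℝ) ≤ T}) := by
  refine congrArg sInf (Set.ext fun v => ⟨?_, ?_⟩)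
  · rintro ⟨q, a, hq, hqT, ha, rfl⟩
    exact ⟨⟨q, a, hq, ha⟩, hqT, rfl⟩
  · rintro ⟨x, hxT, rfl⟩
    exact ⟨x.height, x.coord, x.one_le_height, hxT, x.sum_coord_sq, rfl⟩

theorem isLeast_PsiSphere [Nonempty (Fin d)] (ξ : Fin d → ℝ) (hT : 1 ≤ T) :
    IsLeast (ConePoint.error ξ '' {x | (x.height : ℝ) ≤ T}) (PsiSphere ξ T) := by
  have errors_finite := (ConePoint.finite_setOf_height_le T).image (ConePoint.error ξ)
  obtain ⟨x, hx⟩ := ConePoint.exists_height_eq_one (ι := Fin d)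
  have errors_nonempty : (ConePoint.error ξ '' {x | (x.height : ℝ) ≤ T}).Nonempty :=
    ⟨_, x, by simpa [hx] using hT, rfl⟩
  rw [PsiSphere_eq_sInf_image]
  exact ⟨errors_nonempty.csInf_mem errors_finite,
    fun _ hv => csInf_le errors_finite.bddBelow hv⟩

theorem PsiSphere_pos [Nonempty (Fin d)] (hirr : ¬ ∃ r : Fin d → ℚ, (fun i => (r i : ℝ)) = ξ)
    (hT : 1 ≤ T) : 0 < PsiSphere ξ T := by
  obtain ⟨x, -, hx⟩ := (isLeast_PsiSphere ξ hT).1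
  exact hx ▸ x.error_pos hirr

theorem PsiSphere_le_PsiSphere_max [Nonempty (Fin d)] (hT : 1 ≤ T) (hpos : 0 < PsiSphere ξ T) :
    PsiSphere ξ T ≤ PsiSphere ξ (max T (1 / 2 / PsiSphere ξ T)) := by
  obtain ⟨x, hxT, hx⟩ := (isLeast_PsiSphere ξ hT).1
  obtain ⟨y, hyT, hy⟩ := (isLeast_PsiSphere ξ (le_max_of_le_left hT)).1
  rw [← hy]
  by_contra! improves
  have height_gt : T < y.height := by
    by_contra! height_le
    exact improves.not_ge ((isLeast_PsiSphere ξ hT).2 ⟨y, height_le, rfl⟩)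
  have height_le : x.height ≤ y.height := mod_cast (hxT.trans_lt height_gt).le
  have half_lt : 1 / 2 < y.height * PsiSphere ξ T :=
    hx ▸ ConePoint.half_lt_height_mul_error height_le (hx ▸ improves)
  exact (max_lt height_gt ((div_lt_iff₀ hpos).2 half_lt)).not_ge hyT

end PsiSphere

theorem intrinsic_uniform_lower_bound_general {d : ℕ} {ξ : Fin d → ℝ}
    (hirr : ¬ ∃ r : Fin d → ℚ, (fun i => (r i : ℝ)) = ξ) :
    ∃ᶠ T in atTop, 1 / 2 ≤ T * PsiSphere ξ T := by
  have : Nonempty (Fin d) := by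
    by_contra! hempty
    exact hirr ⟨0, Subsingleton.elim _ _⟩
  refine frequently_atTop.2 fun T₀ => ?_
  have one_le : 1 ≤ max T₀ 1 := le_max_right _ _
  have Psi_pos := PsiSphere_pos hirr one_le
  set T := max T₀ 1
  refine ⟨max T (1 / 2 / PsiSphere ξ T), le_max_of_le_left (le_max_left _ _), ?_⟩
  calc (1 / 2 : ℝ) = 1 / 2 / PsiSphere ξ T * PsiSphere ξ T :=
        (div_mul_cancel₀ _ Psi_pos.ne').symm
    _ ≤ max T (1 / 2 / PsiSphere ξ T) * PsiSphere ξ (max T (1 / 2 / PsiSphere ξ T)) :=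
        mul_le_mul (le_max_right _ _) (PsiSphere_le_PsiSphere_max one_le Psi_pos) Psi_pos.le
          (zero_le_one.trans (le_max_of_le_left one_le))

/-- Theorem 3: for `d ≥ 2` and irrational `ξ` on the unit sphere, for every `ε > 0`
there exist arbitrarily large `T` with `T · Ψ_ξ(T) ≥ 1/4 - ε`. -/
theorem intrinsic_uniform_lower_bound
    (d : ℕ) (hd : 2 ≤ d) (ξ : Fin d → ℝ)
    (hirr : ¬ ∃ x : Fin d → ℚ, (fun i => (x i : ℝ)) = ξ)
    (hsphere : ∑ i, ξ i ^ 2 = 1) :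
    ∀ ε : ℝ, 0 < ε → ∀ T₀ : ℝ, ∃ T : ℝ, T₀ ≤ T ∧
      T * PsiSphere ξ T ≥ 1 / 4 - ε := by
  intro ε hε T₀
  obtain ⟨T, hT, half_le⟩ := frequently_atTop.1 (intrinsic_uniform_lower_bound_general hirr) T₀
  exact ⟨T, hT, by linarith⟩
end
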